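/- Let m ≥ 1 be an integer, let μ, ν ≥ 0 be integers with μ + ν = m, and let α ∈ (0,1). There is a constant C, depending only on m and α, such that for every R with 0 < R ≤ 1 and every h of class C^{α}(D), the function T^ν T̄^μ h is of class C^{m+α}(D) and satisfies ‖T^ν T̄^μ h‖^{(m)} ≤ C ‖h‖, where T^ν and T̄^μ denote iterates of T and T̄ (with T^0 = T̄^0 = identity). -/

import Mathlib

open Complex MeasureTheory Metric ENNReal NNReal

noncomputable section

/-- Wirtinger derivative `∂`. -/
def wD (f : ℂ → ℂ) : ℂ → ℂ := fun z =>
  (fderiv ℝ f z 1 - Complex.I * fderiv ℝ f z Complex.I) / 2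

/-- Wirtinger derivative `∂̄`. -/
def wDbar (f : ℂ → ℂ) : ℂ → ℂ := fun z =>
  (fderiv ℝ f z 1 + Complex.I * fderiv ℝ f z Complex.I) / 2

/-- Iterated Wirtinger derivative `∂^i ∂̄^j`. -/
def wDij (i j : ℕ) (f : ℂ → ℂ) : ℂ → ℂ := wD^[i] (wDbar^[j] f)

/-- α-Hölder constant of `f` on `A`, valued in `ℝ≥0∞`. -/
def Hol (α : ℝ) (A : Set ℂ) (f : ℂ → ℂ) : ℝ≥0∞ :=
  ⨆ z ∈ A, ⨆ z' ∈ A, ⨆ _ : z ≠ z', (‖f z - f z'‖₊ : ℝ≥0∞) / (‖z - z'‖₊ : ℝ≥0∞) ^ α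

/-- `f` is of class `C^{k+α}(D)`, `D` the closed disk of radius `R`. -/
def CkHolder (k : ℕ) (α R : ℝ) (f : ℂ → ℂ) : Prop :=
  (∃ U : Set ℂ, IsOpen U ∧ closedBall (0:ℂ) R ⊆ U ∧ ContDiffOn ℝ k f U) ∧
  ∀ i j : ℕ, i + j = k → Hol α (closedBall (0:ℂ) R) (wDij i j f) < ⊤

/-- The norm `‖f‖ = sup_D |f| + (2R)^α H_α[f]`. -/
def hnorm (α R : ℝ) (f : ℂ → ℂ) : ℝ≥0∞ :=
  (⨆ z ∈ closedBall (0:ℂ) R, (‖f z‖₊ : ℝ≥0∞)) +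
    ENNReal.ofReal ((2*R) ^ α) * Hol α (closedBall (0:ℂ) R) f

/-- The norm `‖f‖^{(k)} = max_{i+j=k} ‖∂^i∂̄^j f‖`. -/
def hnormK (k : ℕ) (α R : ℝ) (f : ℂ → ℂ) : ℝ≥0∞ :=
  ⨆ p ∈ Finset.HasAntidiagonal.antidiagonal k, hnorm α R (wDij p.1 p.2 f)

/-- `C_0^{k+α}(D)`: members of `C^{k+α}(D)` all of whose derivatives of order `≤ k-1`
vanish at the origin. -/
def C0kHolder (k : ℕ) (α R : ℝ) (f : ℂ → ℂ) : Prop :=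
  CkHolder k α R f ∧ ∀ i j : ℕ, i + j < k → wDij i j f 0 = 0

/-- The Cauchy–Green operator `T`. -/
def Tcg (R : ℝ) (g : ℂ → ℂ) : ℂ → ℂ := fun z =>
  -(Real.pi : ℂ)⁻¹ * ∫ ζ in closedBall (0:ℂ) R, g ζ / (ζ - z)

/-- The operator `T̄ g = conj (T (conj g))`. -/
def Tcgbar (R : ℝ) (g : ℂ → ℂ) : ℂ → ℂ := fun z =>
  (starRingEnd ℂ) (Tcg R (fun w => (starRingEnd ℂ) (g w)) z)

/-- The Cauchy integral `S`. -/
def Scau (R : ℝ) (f : ℂ → ℂ) : ℂ → ℂ := fun z =>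
  (2 * Real.pi * Complex.I)⁻¹ * ∮ ζ in C(0, R), f ζ / (ζ - z)

/-- The operator `S̄ f = conj (S (conj f))`. -/
def Scaubar (R : ℝ) (f : ℂ → ℂ) : ℂ → ℂ := fun z =>
  (starRingEnd ℂ) (Scau R (fun w => (starRingEnd ℂ) (f w)) z)

/-- The boundary operator `S_b`. -/
def Sb (R : ℝ) (f : ℂ → ℂ) : ℂ → ℂ := fun z =>
  (2 * Real.pi * Complex.I)⁻¹ *
    ∫ θ in (0:ℝ)..(2 * Real.pi),
      f (R * Complex.exp (Complex.I * θ)) / (R * Complex.exp (Complex.I * θ) - z) *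
        (-Complex.I * R * Complex.exp (-Complex.I * θ))

/-- The Taylor polynomial `P_k(ζ, z)` of `f` at `z` of degree `k`. -/
def TaylorP (k : ℕ) (f : ℂ → ℂ) (ζ z : ℂ) : ℂ :=
  ∑ l ∈ Finset.range (k+1), ((Nat.factorial l : ℂ))⁻¹ *
    ∑ p ∈ Finset.HasAntidiagonal.antidiagonal l,
      wDij p.1 p.2 f z * (ζ - z) ^ p.1 * ((starRingEnd ℂ) ζ - (starRingEnd ℂ) z) ^ p.2

/-- The operator `^{k+2}T`. -/
def TkOp (k : ℕ) (R : ℝ) (f : ℂ → ℂ) : ℂ → ℂ := fun z =>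
  -((Nat.factorial (k+1) : ℂ) / (Real.pi : ℂ)) *
    ∫ ζ in closedBall (0:ℂ) R, (f ζ - TaylorP k f ζ z) / (ζ - z) ^ (k + 2)

end

noncomputable section

/-- Norm `‖f‖` computed on the open disk. -/
def hnormB (α R : ℝ) (f : ℂ → ℂ) : ℝ≥0∞ :=
  (⨆ z ∈ ball (0:ℂ) R, (‖f z‖₊ : ℝ≥0∞)) +
    ENNReal.ofReal ((2*R) ^ α) * Hol α (ball (0:ℂ) R) f

/-- Norm `‖f‖^{(k)}` computed on the open disk. -/
def hnormKB (k : ℕ) (α R : ℝ) (f : ℂ → ℂ) : ℝ≥0∞ :=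
  ⨆ p ∈ Finset.HasAntidiagonal.antidiagonal k, hnormB α R (wDij p.1 p.2 f)

/-- `f` is of class `C^{k+α}(D)`, in the sense that it is `C^k` on the open disk,
all its derivatives of order `≤ k` extend continuously to the closed disk, and its
derivatives of order `k` have finite `α`-Hölder constant. -/
def CkHolderBall (k : ℕ) (α R : ℝ) (f : ℂ → ℂ) : Prop :=
  ContDiffOn ℝ k f (ball (0:ℂ) R) ∧
  (∀ i j : ℕ, i + j ≤ k → ∃ g : ℂ → ℂ, ContinuousOn g (closedBall (0:ℂ) R) ∧
    Set.EqOn (wDij i j f) g (ball (0:ℂ) R)) ∧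
  ∀ i j : ℕ, i + j = k → Hol α (ball (0:ℂ) R) (wDij i j f) < ⊤

end

/-!
On the closed disk `D`, the function `T f` of an `α`-Hölder `f` has Wirtinger derivatives
`∂̄(T f) = f` and `∂(T f) = Π f`, where `Π f z = -π⁻¹ ∫ (f ζ - f z) / (ζ - z) ^ 2` (that is,
`TkOp 0 R f`) is `α`-Hölder again; both facts rest on estimates for products of Riesz kernels and on
the explicit value `∫ (ζ - z)⁻¹ = -π z̄`. Hence `T` gains one derivative on `C^α`, and on `C^{k+α}`
it does so as soon as `Π f` is controlled in `C^{k+α}`. If `∂f = p` and `∂̄f = q`, then `T` and `∂`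
commute on functions vanishing on the circle, while rotation invariance of `T` handles functions of
the form `ζ ζ̄ f`; together these give, for functions merely smooth up to the boundary,
`R² Π f = T (R² p - 2 ζ̄ f - ζ̄² q) + z̄² f`, from which the gain follows by induction on `k`.
Finally, both sides of the inequality are invariant under dilations, so the constant obtained for
the unit disk serves every radius.
-/

open Module (finrank)
open scoped ComplexConjugate

noncomputable section

section RieszKernels

lemma pow_pred_mul_rpow {n : ℕ} (hn : 0 < n) {y : ℝ} (hy : 0 < y) (s : ℝ) :
    y ^ (n - 1) * y ^ s = y ^ (n - 1 + s) := by
  rw [← Real.rpow_natCast, Nat.cast_pred hn, ← Real.rpow_add hy]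

variable {E : Type*} [NormedAddCommGroup E] {s t : ℝ}

lemma closedBall_subset_preimage_sub {a : E} {r : ℝ} (ha : a ∈ closedBall (0 : E) r) :
    closedBall (0 : E) r ⊆ (· - a) ⁻¹' closedBall 0 (2 * r) := by
  intro x hx
  rw [mem_closedBall_zero_iff] at ha hx
  rw [Set.mem_preimage, mem_closedBall_zero_iff]
  linarith [norm_sub_le x a]

/-- The kernel `‖x‖ ^ (s + t)`, with the factor `‖x‖ ^ t` frozen inside the ball of radius `d`.
It dominates products of Riesz kernels centred at two points at distance `2 * d`. -/
def truncatedRiesz (s t d : ℝ) (x : E) : ℝ := ‖x‖ ^ s * max ‖x‖ d ^ t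

lemma truncatedRiesz_nonneg (s t d : ℝ) (x : E) : 0 ≤ truncatedRiesz s t d x :=
  mul_nonneg (by positivity) (Real.rpow_nonneg (le_max_of_le_left (norm_nonneg x)) t)

lemma norm_sub_rpow_mul_le_truncatedRiesz_of_le (ht : t < 0) {a b x : E}
    (hab : a ≠ b) (h : ‖x - a‖ ≤ ‖x - b‖) :
    ‖x - a‖ ^ s * ‖x - b‖ ^ t ≤ truncatedRiesz s t (2⁻¹ * ‖a - b‖) (x - a) := by
  have h_half : 2⁻¹ * ‖a - b‖ ≤ ‖x - b‖ := by
    linarith [norm_sub_le_norm_sub_add_norm_sub a x b, norm_sub_rev a x]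
  have h_max : max ‖x - a‖ (2⁻¹ * ‖a - b‖) ≤ ‖x - b‖ := max_le h h_half
  rw [truncatedRiesz]
  gcongr ?_ * ?_
  have h_pos : 0 < 2⁻¹ * ‖a - b‖ := by have := norm_sub_pos_iff.2 hab; positivity
  exact Real.rpow_le_rpow_of_nonpos (lt_max_of_lt_right h_pos) h_max ht.le

lemma norm_sub_rpow_mul_le_truncatedRiesz (hs : s < 0) (ht : t < 0) {a b : E}
    (hab : a ≠ b) (x : E) :
    ‖x - a‖ ^ s * ‖x - b‖ ^ t ≤ truncatedRiesz s t (2⁻¹ * ‖a - b‖) (x - a) +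
      truncatedRiesz t s (2⁻¹ * ‖a - b‖) (x - b) := by
  rcases le_total ‖x - a‖ ‖x - b‖ with h | h
  · exact le_add_of_le_of_nonneg (norm_sub_rpow_mul_le_truncatedRiesz_of_le ht hab h)
      (truncatedRiesz_nonneg _ _ _ _)
  · rw [mul_comm, norm_sub_rev a b]
    exact le_add_of_nonneg_of_le (truncatedRiesz_nonneg _ _ _ _)
      (norm_sub_rpow_mul_le_truncatedRiesz_of_le hs hab.symm h)

variable [NormedSpace ℝ E]

lemma truncatedRiesz_eq_smul {d : ℝ} (hd : 0 < d) (x : E) :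
    truncatedRiesz s t d x = d ^ (s + t) * truncatedRiesz s t 1 (d⁻¹ • x) := by
  have h_norm : ‖x‖ = d * ‖d⁻¹ • x‖ := by
    rw [norm_smul, norm_inv, Real.norm_of_nonneg hd.le, mul_inv_cancel_left₀ hd.ne']
  have h_max : max ‖x‖ d = d * max ‖d⁻¹ • x‖ 1 := by
    rw [mul_max_of_nonneg _ _ hd.le, ← h_norm, mul_one]
  rw [truncatedRiesz, truncatedRiesz, h_max, h_norm, Real.mul_rpow hd.le (norm_nonneg _),
    Real.mul_rpow hd.le (le_max_of_le_left (norm_nonneg _)), Real.rpow_add hd]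
  ring

variable [FiniteDimensional ℝ E] [MeasurableSpace E] [BorelSpace E] (μ : Measure E)
  [μ.IsAddHaarMeasure]

lemma integral_truncatedRiesz {d : ℝ} (hd : 0 < d) :
    ∫ x : E, truncatedRiesz s t d x ∂μ =
      d ^ (s + t + finrank ℝ E) * ∫ x : E, truncatedRiesz s t 1 x ∂μ := by
  simp_rw [truncatedRiesz_eq_smul hd]
  rw [integral_const_mul, Measure.integral_comp_inv_smul, abs_of_pos (by positivity), smul_eq_mul,
    ← mul_assoc, ← Real.rpow_natCast, ← Real.rpow_add hd]

variable [Nontrivial E]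

lemma integrableOn_closedBall_norm_rpow (hs : -finrank ℝ E < s) (r : ℝ) :
    IntegrableOn (fun x : E => ‖x‖ ^ s) (closedBall 0 r) μ := by
  refine IntegrableOn.mono_set ?_ (closedBall_subset_ball (lt_add_of_le_of_pos (le_max_left r 0)
    one_pos))
  refine (integrableOn_fun_norm_addHaar μ (f := (· ^ s))).2 ?_
  have h_radial : IntegrableOn (fun y : ℝ => y ^ (finrank ℝ E - 1 + s))
      (Set.Ioo 0 (max r 0 + 1)) :=
    (intervalIntegral.integrableOn_Ioo_rpow_iff (by positivity)).2 (by linarith)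
  exact h_radial.congr_fun (fun y hy => (pow_pred_mul_rpow Module.finrank_pos hy.1 s).symm)
    measurableSet_Ioo

lemma integrableOn_preimage_norm_sub_rpow (hs : -finrank ℝ E < s) (a : E) (r : ℝ) :
    IntegrableOn (fun x => ‖x - a‖ ^ s) ((· - a) ⁻¹' closedBall 0 r) μ :=
  ((measurePreserving_sub_right μ a).integrableOn_comp_preimage
    (MeasurableEquiv.subRight a).measurableEmbedding).2 (integrableOn_closedBall_norm_rpow μ hs r)

lemma integrableOn_norm_sub_rpow (hs : -finrank ℝ E < s) {a : E} {r : ℝ}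
    (ha : a ∈ closedBall (0 : E) r) :
    IntegrableOn (fun x => ‖x - a‖ ^ s) (closedBall 0 r) μ :=
  (integrableOn_preimage_norm_sub_rpow μ hs a _).mono_set (closedBall_subset_preimage_sub ha)

lemma setIntegral_norm_sub_rpow_le (hs : -finrank ℝ E < s) {a : E} {r : ℝ}
    (ha : a ∈ closedBall (0 : E) r) :
    ∫ x in closedBall 0 r, ‖x - a‖ ^ s ∂μ ≤ ∫ x in closedBall (0 : E) (2 * r), ‖x‖ ^ s ∂μ := by
  calc ∫ x in closedBall 0 r, ‖x - a‖ ^ s ∂μ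
      ≤ ∫ x in (· - a) ⁻¹' closedBall 0 (2 * r), ‖x - a‖ ^ s ∂μ :=
        setIntegral_mono_set (integrableOn_preimage_norm_sub_rpow μ hs a _)
          (.of_forall fun x => by positivity) (closedBall_subset_preimage_sub ha).eventuallyLE
    _ = ∫ x in closedBall (0 : E) (2 * r), ‖x‖ ^ s ∂μ :=
        (measurePreserving_sub_right μ a).setIntegral_preimage_emb
          (MeasurableEquiv.subRight a).measurableEmbedding (fun x => ‖x‖ ^ s) _

lemma norm_setIntegral_le_of_norm_le_rpow {F : Type*} [NormedAddCommGroup F] [NormedSpace ℝ F]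
    (hs : -finrank ℝ E < s) {a : E} {r : ℝ} (ha : a ∈ closedBall (0 : E) r) {B : ℝ} (hB : 0 ≤ B)
    {f : E → F} (hf : ∀ x ∈ closedBall 0 r, ‖f x‖ ≤ B * ‖x - a‖ ^ s) :
    ‖∫ x in closedBall 0 r, f x ∂μ‖ ≤ B * ∫ x in closedBall (0 : E) (2 * r), ‖x‖ ^ s ∂μ := by
  calc ‖∫ x in closedBall 0 r, f x ∂μ‖
      ≤ ∫ x in closedBall 0 r, B * ‖x - a‖ ^ s ∂μ :=
        norm_integral_le_of_norm_le ((integrableOn_norm_sub_rpow μ hs ha).const_mul B)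
          (ae_restrict_of_forall_mem measurableSet_closedBall hf)
    _ ≤ B * ∫ x in closedBall (0 : E) (2 * r), ‖x‖ ^ s ∂μ := by
        rw [integral_const_mul]
        gcongr
        exact setIntegral_norm_sub_rpow_le μ hs ha

lemma integrableOn_of_norm_le_rpow {F : Type*} [NormedAddCommGroup F] (hs : -finrank ℝ E < s)
    {a : E} {r : ℝ} (ha : a ∈ closedBall (0 : E) r) {B : ℝ} {f : E → F}
    (hf_meas : AEStronglyMeasurable f (μ.restrict (closedBall 0 r)))
    (hf : ∀ x ∈ closedBall 0 r, ‖f x‖ ≤ B * ‖x - a‖ ^ s) : IntegrableOn f (closedBall 0 r) μ :=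
  ((integrableOn_norm_sub_rpow μ hs ha).const_mul B).mono' hf_meas
    (ae_restrict_of_forall_mem measurableSet_closedBall hf)

lemma integrable_truncatedRiesz_one (hs : -finrank ℝ E < s) (hst : s + t < -finrank ℝ E) :
    Integrable (truncatedRiesz (E := E) s t 1) μ := by
  refine (integrable_fun_norm_addHaar μ (f := fun y => y ^ s * max y 1 ^ t)).2 ?_
  rw [← Set.Ioc_union_Ioi_eq_Ioi zero_le_one, integrableOn_union]
  constructor
  · have h_radial : IntegrableOn (fun y : ℝ => y ^ (finrank ℝ E - 1 + s)) (Set.Ioc 0 1) :=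
      (intervalIntegral.intervalIntegrable_rpow' (by linarith)).1
    refine h_radial.congr_fun (fun y hy => ?_) measurableSet_Ioc
    simp only [smul_eq_mul, max_eq_right hy.2, Real.one_rpow, mul_one,
      pow_pred_mul_rpow Module.finrank_pos hy.1]
  · have h_radial : IntegrableOn (fun y : ℝ => y ^ (finrank ℝ E - 1 + (s + t))) (Set.Ioi 1) :=
      integrableOn_Ioi_rpow_of_lt (by linarith) one_pos
    refine h_radial.congr_fun (fun y hy => ?_) measurableSet_Ioi
    have hy : 1 < y := hy
    simp only [smul_eq_mul, max_eq_left hy.le, ← Real.rpow_add (one_pos.trans hy),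
      pow_pred_mul_rpow Module.finrank_pos (one_pos.trans hy)]

lemma integrable_truncatedRiesz (hs : -finrank ℝ E < s) (hst : s + t < -finrank ℝ E) {d : ℝ}
    (hd : 0 < d) : Integrable (truncatedRiesz (E := E) s t d) μ := by
  rw [funext (truncatedRiesz_eq_smul hd)]
  exact ((integrable_truncatedRiesz_one μ hs hst).comp_smul (inv_ne_zero hd.ne')).const_mul _

lemma exists_integral_norm_sub_rpow_mul_le (hs : -finrank ℝ E < s) (ht : -finrank ℝ E < t)
    (hst : s + t < -finrank ℝ E) :
    ∃ C, 0 ≤ C ∧ ∀ a b : E, a ≠ b →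
      Integrable (fun x => ‖x - a‖ ^ s * ‖x - b‖ ^ t) μ ∧
      ∫ x, ‖x - a‖ ^ s * ‖x - b‖ ^ t ∂μ ≤ C * ‖a - b‖ ^ (s + t + finrank ℝ E) := by
  set I : ℝ → ℝ → ℝ := fun s t => ∫ x : E, truncatedRiesz s t 1 x ∂μ
  have hI (s t) : 0 ≤ I s t := integral_nonneg (truncatedRiesz_nonneg s t 1)
  refine ⟨2⁻¹ ^ (s + t + finrank ℝ E) * (I s t + I t s),
    mul_nonneg (by positivity) (add_nonneg (hI s t) (hI t s)), fun a b hab => ?_⟩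
  have hd : 0 < 2⁻¹ * ‖a - b‖ := by have := norm_sub_pos_iff.2 hab; positivity
  have hst' : t + s < -finrank ℝ E := by rwa [add_comm]
  have h_int_a := (integrable_truncatedRiesz μ hs hst hd).comp_sub_right a
  have h_int_b := (integrable_truncatedRiesz μ ht hst' hd).comp_sub_right b
  have h_le (x : E) : ‖‖x - a‖ ^ s * ‖x - b‖ ^ t‖ ≤ truncatedRiesz s t (2⁻¹ * ‖a - b‖) (x - a) +
      truncatedRiesz t s (2⁻¹ * ‖a - b‖) (x - b) := by
    rw [Real.norm_of_nonneg (by positivity)]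
    exact norm_sub_rpow_mul_le_truncatedRiesz (by linarith) (by linarith) hab x
  have h_int : Integrable (fun x => ‖x - a‖ ^ s * ‖x - b‖ ^ t) μ :=
    (h_int_a.add h_int_b).mono' (by fun_prop) (.of_forall h_le)
  refine ⟨h_int, ?_⟩
  calc ∫ x, ‖x - a‖ ^ s * ‖x - b‖ ^ t ∂μ
      ≤ ∫ x, truncatedRiesz s t (2⁻¹ * ‖a - b‖) (x - a) +
          truncatedRiesz t s (2⁻¹ * ‖a - b‖) (x - b) ∂μ :=
        integral_mono h_int (h_int_a.add h_int_b) fun x => (le_abs_self _).trans (h_le x)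
    _ = (2⁻¹ * ‖a - b‖) ^ (s + t + finrank ℝ E) * (I s t + I t s) := by
        rw [integral_add h_int_a h_int_b, integral_sub_right_eq_self (truncatedRiesz s t _),
          integral_sub_right_eq_self (truncatedRiesz t s _), integral_truncatedRiesz μ hd,
          integral_truncatedRiesz μ hd, add_comm t s, mul_add]
    _ = 2⁻¹ ^ (s + t + finrank ℝ E) * (I s t + I t s) * ‖a - b‖ ^ (s + t + finrank ℝ E) := by
        rw [Real.mul_rpow (by positivity) (norm_nonneg _), mul_right_comm]

end RieszKernels

section Rotation

lemma exists_rotation_eq_mul {u : ℂ} (hu : ‖u‖ = 1) :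
    ∃ c : Circle, (rotation c : ℂ → ℂ) = (u * ·) :=
  ⟨⟨u, mem_sphere_zero_iff_norm.2 hu⟩, rfl⟩

lemma integrableOn_closedBall_comp_mul {F : Type*} [NormedAddCommGroup F] {u : ℂ} (hu : ‖u‖ = 1)
    {R : ℝ} {f : ℂ → F} :
    IntegrableOn (fun ζ => f (u * ζ)) (closedBall 0 R) ↔ IntegrableOn f (closedBall 0 R) := by
  obtain ⟨c, hc⟩ := exists_rotation_eq_mul hu
  have h := (rotation c).measurePreserving.integrableOn_comp_preimage
    (rotation c).toHomeomorph.measurableEmbedding (f := f) (s := closedBall 0 R)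
  rwa [(rotation c).preimage_closedBall, map_zero, hc] at h

variable {F : Type*} [NormedAddCommGroup F] [NormedSpace ℝ F]

lemma setIntegral_closedBall_comp_mul {u : ℂ} (hu : ‖u‖ = 1) (R : ℝ) (f : ℂ → F) :
    ∫ ζ in closedBall 0 R, f (u * ζ) = ∫ ζ in closedBall 0 R, f ζ := by
  obtain ⟨c, hc⟩ := exists_rotation_eq_mul hu
  have h := (rotation c).measurePreserving.setIntegral_preimage_emb
    (rotation c).toHomeomorph.measurableEmbedding f (closedBall 0 R)
  rwa [(rotation c).preimage_closedBall, map_zero, hc] at h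

lemma norm_circleMap_zero_one (θ : ℝ) : ‖circleMap 0 1 θ‖ = 1 := by simp

lemma setIntegral_closedBall_circleAverage [CompleteSpace F] {R : ℝ} {f : ℂ → F}
    (hf_meas : StronglyMeasurable f) (hf : IntegrableOn f (closedBall 0 R)) :
    ∫ ζ in closedBall 0 R, Real.circleAverage (fun u => f (u * ζ)) 0 1 =
      ∫ ζ in closedBall 0 R, f ζ := by
  have h_meas : StronglyMeasurable (Function.uncurry fun (θ : ℝ) (ζ : ℂ) =>
      f (circleMap 0 1 θ * ζ)) := hf_meas.comp_measurable (by fun_prop)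
  have h_int : Integrable (Function.uncurry fun (θ : ℝ) (ζ : ℂ) => f (circleMap 0 1 θ * ζ))
      ((volume.restrict (Set.uIoc 0 (2 * Real.pi))).prod (volume.restrict (closedBall 0 R))) := by
    refine (integrable_prod_iff h_meas.aestronglyMeasurable).2 ⟨.of_forall fun θ =>
      (integrableOn_closedBall_comp_mul (norm_circleMap_zero_one θ)).2 hf, ?_⟩
    simp only [Function.uncurry_apply_pair]
    simp_rw [setIntegral_closedBall_comp_mul (norm_circleMap_zero_one _) R (fun ζ => ‖f ζ‖)]
    exact continuous_const.integrableOn_uIoc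
  simp only [Real.circleAverage_def]
  rw [integral_smul, ← intervalIntegral_integral_swap h_int]
  simp_rw [setIntegral_closedBall_comp_mul (norm_circleMap_zero_one _) R f,
    intervalIntegral.integral_const, sub_zero, smul_smul, inv_mul_cancel₀ Real.two_pi_pos.ne',
    one_smul]

end Rotation

section IntegralInvSub

lemma diffContOnCl_inv_mul_sub {a b : ℂ} (h : ‖a‖ < ‖b‖) :
    DiffContOnCl ℂ (fun u => (u * a - b)⁻¹) (ball 0 1) := by
  refine DifferentiableOn.diffContOnCl_ball (U := closedBall 0 1) (fun u hu => ?_) subset_rfl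
  have h_ne : u * a - b ≠ 0 := fun h_eq => by
    have h_norm : ‖u‖ * ‖a‖ = ‖b‖ := by rw [← norm_mul, sub_eq_zero.1 h_eq]
    nlinarith [norm_nonneg a, mem_closedBall_zero_iff.1 hu]
  have h_diff : DifferentiableAt ℂ (fun u => u * a - b) u := by fun_prop
  exact (h_diff.inv h_ne).differentiableWithinAt

lemma circleAverage_inv_mul_sub {ζ z : ℂ} (h : ‖ζ‖ ≠ ‖z‖) :
    Real.circleAverage (fun u => (u * ζ - z)⁻¹) 0 1 = if ‖ζ‖ < ‖z‖ then -z⁻¹ else 0 := by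
  split_ifs with h_lt
  · rw [DiffContOnCl.circleAverage (by rw [abs_one]; exact diffContOnCl_inv_mul_sub h_lt)]
    simp
  · -- Inverting the circle moves the pole `z / ζ` of the integrand outside the unit disk.
    have h_inv : Set.EqOn (fun u => (u⁻¹ * ζ - z)⁻¹) (fun u => u * -(u * z - ζ)⁻¹)
        (sphere 0 |1|) := by
      intro u hu
      have hu₀ : u ≠ 0 := ne_zero_of_mem_sphere (by norm_num) ⟨u, hu⟩
      have h_fac : u⁻¹ * ζ - z = u⁻¹ * -(u * z - ζ) := by field_simp; ring
      simp only [h_fac, mul_inv, inv_inv, inv_neg]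
    rw [← Real.circleAverage_zero_one_congr_inv, Real.circleAverage_congr_sphere h_inv]
    have h_gt : ‖z‖ < ‖ζ‖ := lt_of_le_of_ne (not_lt.1 h_lt) h.symm
    have h_diff : DiffContOnCl ℂ (fun u => u * -(u * z - ζ)⁻¹) (ball 0 |1|) := by
      rw [abs_one]
      exact differentiable_id.diffContOnCl.smul (diffContOnCl_inv_mul_sub h_gt).neg
    rw [h_diff.circleAverage, zero_mul]

lemma neg_finrank_complex_lt {s : ℝ} (hs : -2 < s) : -(finrank ℝ ℂ : ℝ) < s := by
  simpa [finrank_real_complex] using hs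

lemma integrableOn_inv_sub {R : ℝ} {z : ℂ} (hz : z ∈ closedBall 0 R) :
    IntegrableOn (fun ζ => (ζ - z)⁻¹) (closedBall 0 R) :=
  integrableOn_of_norm_le_rpow volume (s := -1) (B := 1) (neg_finrank_complex_lt (by norm_num)) hz
    (by fun_prop) fun ζ _ => by rw [norm_inv, Real.rpow_neg_one, one_mul]

lemma integral_closedBall_inv_sub {R : ℝ} {z : ℂ} (hz : z ∈ closedBall 0 R) :
    ∫ ζ in closedBall 0 R, (ζ - z)⁻¹ = -Real.pi * conj z := by
  have h_avg : ∀ᵐ ζ ∂volume.restrict (closedBall 0 R),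
      Real.circleAverage (fun u => (u * ζ - z)⁻¹) 0 1 =
        (ball 0 ‖z‖).indicator (fun _ => -z⁻¹) ζ := by
    filter_upwards [ae_restrict_of_ae (measure_eq_zero_iff_ae_notMem.1
      (Measure.addHaar_sphere volume (0 : ℂ) ‖z‖))] with ζ hζ
    rw [circleAverage_inv_mul_sub (by simpa using hζ), Set.indicator]
    simp only [mem_ball_zero_iff]
  have h_sub : ball 0 ‖z‖ ⊆ closedBall (0 : ℂ) R :=
    ball_subset_closedBall.trans (closedBall_subset_closedBall (mem_closedBall_zero_iff.1 hz))
  have h_vol : volume.real (ball (0 : ℂ) ‖z‖) = Real.pi * ‖z‖ ^ 2 := by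
    simp [Measure.real, Complex.volume_ball, mul_comm]
  rw [← setIntegral_closedBall_circleAverage (by fun_prop) (integrableOn_inv_sub hz),
    integral_congr_ae h_avg, setIntegral_indicator measurableSet_ball,
    Set.inter_eq_right.2 h_sub, setIntegral_const, h_vol, real_smul]
  rcases eq_or_ne z 0 with rfl | hz₀
  · simp
  · push_cast
    rw [← Complex.mul_conj']
    field_simp

end IntegralInvSub

section HolderBound

/-- `f` is bounded by `B` on `s` and is `α`-Hölder there with constant `B`. A single real constant
stands for both quantities, so that estimates can be chained without `ℝ≥0∞`. -/
structure HolderBound {X F : Type*} [SeminormedAddCommGroup X] [SeminormedAddCommGroup F]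
    (α : ℝ) (s : Set X) (B : ℝ) (f : X → F) : Prop where
  norm_le : ∀ z ∈ s, ‖f z‖ ≤ B
  norm_sub_le : ∀ z ∈ s, ∀ w ∈ s, ‖f z - f w‖ ≤ B * ‖z - w‖ ^ α

namespace HolderBound

variable {X F : Type*} [SeminormedAddCommGroup X] [SeminormedAddCommGroup F] {α B C : ℝ}
  {s : Set X} {f g : X → F}

lemma nonneg (h : HolderBound α s B f) {z : X} (hz : z ∈ s) : 0 ≤ B :=
  (norm_nonneg _).trans (h.norm_le z hz)

lemma mono (h : HolderBound α s B f) (hBC : B ≤ C) : HolderBound α s C f where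
  norm_le z hz := (h.norm_le z hz).trans hBC
  norm_sub_le z hz w hw := (h.norm_sub_le z hz w hw).trans (by gcongr)

lemma mono_set {t : Set X} (h : HolderBound α s B f) (hts : t ⊆ s) : HolderBound α t B f where
  norm_le z hz := h.norm_le z (hts hz)
  norm_sub_le z hz w hw := h.norm_sub_le z (hts hz) w (hts hw)

lemma congr (h : HolderBound α s B f) (hfg : Set.EqOn f g s) : HolderBound α s B g where
  norm_le z hz := hfg hz ▸ h.norm_le z hz
  norm_sub_le z hz w hw := hfg hz ▸ hfg hw ▸ h.norm_sub_le z hz w hw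

lemma continuousOn (hα₀ : 0 < α) (h : HolderBound α s B f) : ContinuousOn f s := by
  have h_holder : HolderOnWith B.toNNReal α.toNNReal f s := fun z hz w hw => by
    have h_nonneg : 0 ≤ B := h.nonneg hz
    rw [edist_eq_enorm_sub, edist_eq_enorm_sub, ← ofReal_norm, ← ofReal_norm,
      Real.coe_toNNReal α hα₀.le, ENNReal.ofReal_rpow_of_nonneg (norm_nonneg _) hα₀.le,
      ← ENNReal.ofReal.eq_def, ← ENNReal.ofReal_mul h_nonneg]
    exact ENNReal.ofReal_le_ofReal (h.norm_sub_le z hz w hw)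
  exact h_holder.continuousOn (Real.toNNReal_pos.2 hα₀)

lemma add (hf : HolderBound α s B f) (hg : HolderBound α s C g) :
    HolderBound α s (B + C) (fun z => f z + g z) where
  norm_le z hz := norm_add_le_of_le (hf.norm_le z hz) (hg.norm_le z hz)
  norm_sub_le z hz w hw := by
    rw [add_sub_add_comm, add_mul]
    exact norm_add_le_of_le (hf.norm_sub_le z hz w hw) (hg.norm_sub_le z hz w hw)

lemma mul {A : Type*} [SeminormedRing A] {f g : X → A} (hf : HolderBound α s B f)
    (hg : HolderBound α s C g) : HolderBound α s (2 * B * C) (fun z => f z * g z) where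
  norm_le z hz := by
    have hB : 0 ≤ B := hf.nonneg hz
    have hC : 0 ≤ C := hg.nonneg hz
    calc ‖f z * g z‖ ≤ B * C := norm_mul_le_of_le (hf.norm_le z hz) (hg.norm_le z hz)
      _ ≤ 2 * B * C := by linarith [mul_nonneg hB hC]
  norm_sub_le z hz w hw := by
    have h_split : f z * g z - f w * g w = f z * (g z - g w) + (f z - f w) * g w := by noncomm_ring
    calc ‖f z * g z - f w * g w‖ ≤ B * (C * ‖z - w‖ ^ α) + B * ‖z - w‖ ^ α * C := by
          rw [h_split]
          exact norm_add_le_of_le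
            (norm_mul_le_of_le (hf.norm_le z hz) (hg.norm_sub_le z hz w hw))
            (norm_mul_le_of_le (hf.norm_sub_le z hz w hw) (hg.norm_le w hw))
      _ = 2 * B * C * ‖z - w‖ ^ α := by ring

lemma star {f : X → ℂ} (hf : HolderBound α s B f) :
    HolderBound α s B (fun z => conj (f z)) where
  norm_le z hz := by simpa only [RCLike.norm_conj] using hf.norm_le z hz
  norm_sub_le z hz w hw := by
    simpa only [← map_sub, RCLike.norm_conj] using hf.norm_sub_le z hz w hw

end HolderBound

end HolderBound

section CauchyGreen

/-- The real-linear map `v ↦ p v + q v̄`, i.e. the differential of a function whose Wirtinger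
derivatives `∂` and `∂̄` at the base point are `p` and `q`. -/
def wirtingerCLM (p q : ℂ) : ℂ →L[ℝ] ℂ :=
  p • ContinuousLinearMap.id ℝ ℂ + q • (conjCLE : ℂ →L[ℝ] ℂ)

@[simp] lemma wirtingerCLM_apply (p q v : ℂ) : wirtingerCLM p q v = p * v + q * conj v := by
  simp [wirtingerCLM]

variable {α B R : ℝ} {f g : ℂ → ℂ} {z a ζ : ℂ}

lemma TkOp_zero_apply (R : ℝ) (f : ℂ → ℂ) (z : ℂ) :
    TkOp 0 R f z = -(Real.pi : ℂ)⁻¹ * ∫ ζ in closedBall 0 R, (f ζ - f z) / (ζ - z) ^ 2 := by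
  simp [TkOp, TaylorP, wDij]

lemma norm_neg_inv_pi_mul_le (w : ℂ) : ‖-(Real.pi : ℂ)⁻¹ * w‖ ≤ ‖w‖ := by
  rw [norm_mul, norm_neg, norm_inv, norm_real, Real.norm_of_nonneg Real.pi_pos.le]
  exact mul_le_of_le_one_left (norm_nonneg w)
    (inv_le_one_of_one_le₀ (by linarith [Real.pi_gt_three]))

lemma integrableOn_div_sub (hf : ContinuousOn f (closedBall 0 R)) (hz : z ∈ closedBall 0 R) :
    IntegrableOn (fun ζ => f ζ / (ζ - z)) (closedBall 0 R) :=
  (integrableOn_inv_sub hz).continuousOn_mul hf (isCompact_closedBall 0 R)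

lemma exists_norm_Tcg_le (R : ℝ) :
    ∃ C, 0 ≤ C ∧ ∀ f B, (∀ ζ ∈ closedBall 0 R, ‖f ζ‖ ≤ B) →
      ∀ z ∈ closedBall 0 R, ‖Tcg R f z‖ ≤ C * B := by
  refine ⟨∫ ζ in closedBall (0 : ℂ) (2 * R), ‖ζ‖ ^ (-1 : ℝ), integral_nonneg fun ζ => by positivity,
    fun f B hB z hz => (norm_neg_inv_pi_mul_le _).trans ?_⟩
  rw [mul_comm]
  refine norm_setIntegral_le_of_norm_le_rpow volume (neg_finrank_complex_lt (by norm_num)) hz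
    ((norm_nonneg _).trans (hB z hz)) fun ζ hζ => ?_
  rw [norm_div, Real.rpow_neg_one, div_eq_mul_inv]
  gcongr
  exact hB ζ hζ

lemma HolderBound.norm_sub_div_sq_le {s : Set ℂ} (h : HolderBound α s B f) (hz : z ∈ s)
    (hζ : ζ ∈ s) : ‖(f ζ - f z) / (ζ - z) ^ 2‖ ≤ B * ‖ζ - z‖ ^ (α - 2) := by
  have hB : 0 ≤ B := h.nonneg hz
  rcases eq_or_ne ζ z with rfl | hne
  · simp only [sub_self, zero_div, norm_zero]
    positivity
  · have h_pos : 0 < ‖ζ - z‖ := norm_sub_pos_iff.2 hne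
    rw [norm_div, norm_pow, Real.rpow_sub h_pos, Real.rpow_two, mul_div_assoc']
    gcongr
    exact h.norm_sub_le ζ hζ z hz

lemma HolderBound.integrableOn_sub_div_sq (hα₀ : 0 < α) (h : HolderBound α (closedBall 0 R) B f)
    (hz : z ∈ closedBall 0 R) :
    IntegrableOn (fun ζ => (f ζ - f z) / (ζ - z) ^ 2) (closedBall 0 R) := by
  refine integrableOn_of_norm_le_rpow volume (neg_finrank_complex_lt (by linarith)) hz ?_
    fun ζ hζ => h.norm_sub_div_sq_le hz hζ
  have h_meas := (h.continuousOn hα₀).aestronglyMeasurable (μ := volume) measurableSet_closedBall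
  exact (h_meas.sub aestronglyMeasurable_const).mul (g := fun ζ => ((ζ - z) ^ 2)⁻¹) (by fun_prop)

lemma exists_norm_TkOp_zero_le (hα₀ : 0 < α) (R : ℝ) :
    ∃ C, 0 ≤ C ∧ ∀ f B, HolderBound α (closedBall 0 R) B f →
      ∀ z ∈ closedBall 0 R, ‖TkOp 0 R f z‖ ≤ C * B := by
  refine ⟨∫ ζ in closedBall (0 : ℂ) (2 * R), ‖ζ‖ ^ (α - 2), integral_nonneg fun ζ => by positivity,
    fun f B h z hz => ?_⟩
  rw [TkOp_zero_apply, mul_comm _ B]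
  exact (norm_neg_inv_pi_mul_le _).trans <| norm_setIntegral_le_of_norm_le_rpow volume
    (neg_finrank_complex_lt (by linarith)) hz (h.nonneg hz) fun ζ hζ => h.norm_sub_div_sq_le hz hζ

lemma ae_restrict_ne (s : Set ℂ) (z : ℂ) : ∀ᵐ ζ ∂volume.restrict s, ζ ≠ z :=
  ae_restrict_of_ae (measure_eq_zero_iff_ae_notMem.1 (measure_singleton z))

-- Subtracting `f a * ∫ ((ζ - z)⁻¹ - (ζ - a)⁻¹)`, which is known explicitly, makes the remainder
-- of the first-order expansion of `T f` an absolutely convergent integral.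
lemma HolderBound.Tcg_taylor_eq (hα₀ : 0 < α) (h : HolderBound α (closedBall 0 R) B f)
    (hz : z ∈ closedBall 0 R) (ha : a ∈ closedBall 0 R) :
    Tcg R f z - Tcg R f a - wirtingerCLM (TkOp 0 R f a) (f a) (z - a) =
      -(Real.pi : ℂ)⁻¹ * ∫ ζ in closedBall 0 R,
        (f ζ - f a) / (ζ - a) ^ 2 * ((z - a) ^ 2 / (ζ - z)) := by
  have h_cont := h.continuousOn hα₀
  have h_T := (integrableOn_div_sub h_cont hz).fun_sub (integrableOn_div_sub h_cont ha)
  have h_const := ((integrableOn_inv_sub hz).fun_sub (integrableOn_inv_sub ha)).const_mul (f a)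
  have h_second := (h.integrableOn_sub_div_sq hα₀ ha).mul_const (z - a)
  have h_split : ∫ ζ in closedBall 0 R, (f ζ - f a) / (ζ - a) ^ 2 * ((z - a) ^ 2 / (ζ - z)) =
      ∫ ζ in closedBall 0 R, ((f ζ / (ζ - z) - f ζ / (ζ - a)) -
        f a * ((ζ - z)⁻¹ - (ζ - a)⁻¹)) - (f ζ - f a) / (ζ - a) ^ 2 * (z - a) := by
    refine integral_congr_ae ?_
    filter_upwards [ae_restrict_ne _ z, ae_restrict_ne _ a] with ζ hζz hζa
    have := sub_ne_zero.2 hζz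
    have := sub_ne_zero.2 hζa
    field_simp
    ring
  have hπ : (Real.pi : ℂ) ≠ 0 := ofReal_ne_zero.2 Real.pi_ne_zero
  rw [h_split, integral_sub (h_T.fun_sub h_const) h_second, integral_sub h_T h_const,
    integral_sub (integrableOn_div_sub h_cont hz) (integrableOn_div_sub h_cont ha),
    integral_const_mul, integral_sub (integrableOn_inv_sub hz) (integrableOn_inv_sub ha),
    integral_mul_const, integral_closedBall_inv_sub hz, integral_closedBall_inv_sub ha,
    wirtingerCLM_apply, TkOp_zero_apply, Tcg, Tcg, map_sub]
  field_simp
  ring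

lemma exists_norm_Tcg_taylor_le (hα₀ : 0 < α) (hα₁ : α < 1) :
    ∃ C, 0 ≤ C ∧ ∀ R f B, HolderBound α (closedBall 0 R) B f →
      ∀ z ∈ closedBall 0 R, ∀ a ∈ closedBall 0 R,
        ‖Tcg R f z - Tcg R f a - wirtingerCLM (TkOp 0 R f a) (f a) (z - a)‖ ≤
          C * B * ‖z - a‖ ^ (1 + α) := by
  obtain ⟨C, hC, h_kernel⟩ := exists_integral_norm_sub_rpow_mul_le (s := α - 2) (t := -1)
    (volume : Measure ℂ) (neg_finrank_complex_lt (by linarith))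
    (neg_finrank_complex_lt (by norm_num)) (by norm_num [finrank_real_complex]; linarith)
  refine ⟨C, hC, fun R f B h z hz a ha => ?_⟩
  have hB : 0 ≤ B := h.nonneg hz
  rcases eq_or_ne z a with rfl | hza
  · simp only [sub_self, map_zero, norm_zero]
    positivity
  obtain ⟨h_int, h_le⟩ := h_kernel a z hza.symm
  rw [h.Tcg_taylor_eq hα₀ hz ha]
  calc _ ≤ ‖∫ ζ in closedBall 0 R, (f ζ - f a) / (ζ - a) ^ 2 * ((z - a) ^ 2 / (ζ - z))‖ :=
        norm_neg_inv_pi_mul_le _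
    _ ≤ ∫ ζ in closedBall 0 R, B * ‖z - a‖ ^ 2 * (‖ζ - a‖ ^ (α - 2) * ‖ζ - z‖ ^ (-1 : ℝ)) := by
        refine norm_integral_le_of_norm_le (h_int.integrableOn.const_mul _)
          (ae_restrict_of_forall_mem measurableSet_closedBall fun ζ hζ => ?_)
        rw [norm_mul, norm_div ((z - a) ^ 2), norm_pow, div_eq_mul_inv (‖z - a‖ ^ 2),
          ← Real.rpow_neg_one]
        calc _ ≤ B * ‖ζ - a‖ ^ (α - 2) * (‖z - a‖ ^ 2 * ‖ζ - z‖ ^ (-1 : ℝ)) := by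
              gcongr
              exact h.norm_sub_div_sq_le ha hζ
          _ = _ := by ring
    _ ≤ B * ‖z - a‖ ^ 2 * (C * ‖z - a‖ ^ (α - 1)) := by
        rw [integral_const_mul]
        gcongr
        refine (setIntegral_le_integral h_int (.of_forall fun ζ => by positivity)).trans
          (h_le.trans_eq ?_)
        rw [norm_sub_rev, finrank_real_complex]
        ring_nf
    _ = C * B * ‖z - a‖ ^ (1 + α) := by
        rw [show 1 + α = 2 + (α - 1) by ring, Real.rpow_add (norm_sub_pos_iff.2 hza),
          Real.rpow_two]
        ring

lemma exists_holderBound_TkOp_zero (hα₀ : 0 < α) (hα₁ : α < 1) (R : ℝ) :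
    ∃ C, 0 ≤ C ∧ ∀ f B, HolderBound α (closedBall 0 R) B f →
      HolderBound α (closedBall 0 R) (C * B) (TkOp 0 R f) := by
  obtain ⟨C₁, hC₁, h_sup⟩ := exists_norm_TkOp_zero_le hα₀ R
  obtain ⟨C₂, hC₂, h_taylor⟩ := exists_norm_Tcg_taylor_le hα₀ hα₁
  refine ⟨C₁ + (1 + 2 * C₂), by positivity, fun f B h => ⟨fun z hz => ?_, fun z hz w hw => ?_⟩⟩
  · have hB : 0 ≤ B := h.nonneg hz
    exact (h_sup f B h z hz).trans (by gcongr; exact le_add_of_nonneg_right (by positivity))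
  have hB : 0 ≤ B := h.nonneg hz
  rcases eq_or_ne z w with rfl | hzw
  · simp only [sub_self, norm_zero]
    positivity
  have h_pos : 0 < ‖z - w‖ := norm_sub_pos_iff.2 hzw
  have h_zw := h_taylor R f B h z hz w hw
  have h_wz := h_taylor R f B h w hw z hz
  rw [norm_sub_rev w z] at h_wz
  -- Expanding `T f` at `w` and at `z` and adding leaves only the difference of the differentials.
  have h_diff : (TkOp 0 R f z - TkOp 0 R f w) * (z - w) =
      (Tcg R f z - Tcg R f w - wirtingerCLM (TkOp 0 R f w) (f w) (z - w)) +
      (Tcg R f w - Tcg R f z - wirtingerCLM (TkOp 0 R f z) (f z) (w - z)) -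
      (f z - f w) * conj (z - w) := by
    simp only [wirtingerCLM_apply, map_sub]
    ring
  refine le_of_mul_le_mul_right ?_ h_pos
  calc ‖TkOp 0 R f z - TkOp 0 R f w‖ * ‖z - w‖
      ≤ C₂ * B * ‖z - w‖ ^ (1 + α) + C₂ * B * ‖z - w‖ ^ (1 + α) +
          B * ‖z - w‖ ^ α * ‖z - w‖ := by
        rw [← norm_mul, h_diff]
        refine norm_sub_le_of_le (norm_add_le_of_le h_zw h_wz) ?_
        rw [norm_mul, RCLike.norm_conj]
        gcongr
        exact h.norm_sub_le z hz w hw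
    _ = (1 + 2 * C₂) * B * ‖z - w‖ ^ α * ‖z - w‖ := by
        rw [Real.rpow_add h_pos, Real.rpow_one]
        ring
    _ ≤ (C₁ + (1 + 2 * C₂)) * B * ‖z - w‖ ^ α * ‖z - w‖ := by
        gcongr ?_ * B * _ * _
        exact le_add_of_nonneg_left hC₁

lemma isLittleO_norm_sub_rpow (hα₀ : 0 < α) (a : ℂ) :
    (fun z => ‖z - a‖ ^ (1 + α)) =o[nhds a] fun z => z - a := by
  have h_tendsto : Filter.Tendsto (fun z => ‖z - a‖ ^ α) (nhds a) (nhds 0) := by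
    have h_cont : Continuous fun z => ‖z - a‖ ^ α :=
      (by fun_prop : Continuous fun z => ‖z - a‖).rpow_const fun _ => .inr hα₀.le
    simpa [Real.zero_rpow hα₀.ne'] using h_cont.tendsto a
  have h_mul := (Asymptotics.isBigO_refl (fun z => ‖z - a‖) (nhds a)).mul_isLittleO
    ((Asymptotics.isLittleO_one_iff ℝ).2 h_tendsto)
  simpa [Real.rpow_add' (norm_nonneg _) (by positivity : 1 + α ≠ 0)] using h_mul

lemma HolderBound.hasFDerivWithinAt_Tcg (hα₀ : 0 < α) (hα₁ : α < 1)
    (h : HolderBound α (closedBall 0 R) B f) (ha : a ∈ closedBall 0 R) :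
    HasFDerivWithinAt (Tcg R f) (wirtingerCLM (TkOp 0 R f a) (f a)) (closedBall 0 R) a := by
  obtain ⟨C, -, h_taylor⟩ := exists_norm_Tcg_taylor_le hα₀ hα₁
  refine .of_isLittleO (Asymptotics.IsBigO.trans_isLittleO (.of_bound (C * B) ?_)
    ((isLittleO_norm_sub_rpow hα₀ a).mono nhdsWithin_le_nhds))
  filter_upwards [self_mem_nhdsWithin] with z hz
  rw [Real.norm_of_nonneg (by positivity)]
  exact h_taylor R f B h z hz a ha

end CauchyGreen

section LipschitzFunctions

lemma holderBound_of_lipschitzOnWith {X F : Type*} [SeminormedAddCommGroup X]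
    [SeminormedAddCommGroup F] {α B d : ℝ} {L : ℝ≥0} {s : Set X} {f : X → F} (hα₁ : α < 1)
    (hd : ∀ z ∈ s, ∀ w ∈ s, ‖z - w‖ ≤ d) (hB : ∀ z ∈ s, ‖f z‖ ≤ B) (hL : LipschitzOnWith L f s) :
    HolderBound α s (max B (L * d ^ (1 - α))) f where
  norm_le z hz := (hB z hz).trans (le_max_left _ _)
  norm_sub_le z hz w hw := by
    calc ‖f z - f w‖ ≤ L * ‖z - w‖ := hL.norm_sub_le hz hw
      _ = L * (‖z - w‖ ^ (1 - α) * ‖z - w‖ ^ α) := by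
        rw [← Real.rpow_add' (norm_nonneg _) (by norm_num), sub_add_cancel, Real.rpow_one]
      _ ≤ L * (d ^ (1 - α) * ‖z - w‖ ^ α) := by
        gcongr
        exact hd z hz w hw
      _ ≤ max B (L * d ^ (1 - α)) * ‖z - w‖ ^ α := by
        rw [← mul_assoc]
        gcongr
        exact le_max_right _ _

variable {E F : Type*} [NormedAddCommGroup E] [NormedSpace ℝ E] [FiniteDimensional ℝ E]
  [NormedAddCommGroup F]
  {s : Set E} {f : E → F}

lemma norm_le_of_lipschitzOnWith_of_notMem {L : ℝ≥0} (hs : IsClosed s) (hL : LipschitzOnWith L f s)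
    (h₀ : ∀ x ∈ frontier s, f x = 0) {x y : E} (hx : x ∈ s) (hy : y ∉ s) :
    ‖f x‖ ≤ L * dist x y := by
  obtain ⟨b, hb, hb_dist⟩ := exists_mem_frontier_infDist_compl_eq_dist hx fun h => hy (h ▸ trivial)
  calc ‖f x‖ = dist (f x) (f b) := by rw [h₀ b hb, dist_zero_right]
    _ ≤ L * dist x b := hL.dist_le_mul x hx b (hs.frontier_subset hb)
    _ ≤ L * dist x y := by
      rw [← hb_dist]
      gcongr
      exact infDist_le_dist_of_mem hy

lemma lipschitzWith_indicator {L : ℝ≥0} (hs : IsClosed s) (hL : LipschitzOnWith L f s)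
    (h₀ : ∀ x ∈ frontier s, f x = 0) : LipschitzWith L (s.indicator f) := by
  refine LipschitzWith.of_dist_le_mul fun x y => ?_
  by_cases hx : x ∈ s <;> by_cases hy : y ∈ s
  · simpa only [Set.indicator_of_mem, hx, hy] using hL.dist_le_mul x hx y hy
  · simpa only [Set.indicator_of_mem hx, Set.indicator_of_notMem hy, dist_zero_right] using
      norm_le_of_lipschitzOnWith_of_notMem hs hL h₀ hx hy
  · simpa only [Set.indicator_of_mem hy, Set.indicator_of_notMem hx, dist_zero_left,
      dist_comm x] using norm_le_of_lipschitzOnWith_of_notMem hs hL h₀ hy hx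
  · simp only [Set.indicator_of_notMem, hx, hy, not_false_eq_true, dist_self]
    positivity

end LipschitzFunctions

lemma hasFDerivAt_indicator {E F : Type*} [NormedAddCommGroup E] [NormedSpace ℝ E]
    [NormedAddCommGroup F] [NormedSpace ℝ F] {s : Set E} {f : E → F} {f' : E → E →L[ℝ] F}
    (hs : IsClosed s) (hf : ∀ x ∈ s, HasFDerivWithinAt f (f' x) s x) {x : E} (hx : x ∉ frontier s) :
    HasFDerivAt (s.indicator f) (s.indicator f' x) x := by
  by_cases hxs : x ∈ s
  · have h_nhds : s ∈ nhds x := mem_interior_iff_mem_nhds.1 (by_contra fun h => hx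
      (hs.frontier_eq ▸ ⟨hxs, h⟩))
    rw [Set.indicator_of_mem hxs]
    refine ((hf x hxs).hasFDerivAt h_nhds).congr_of_eventuallyEq ?_
    filter_upwards [h_nhds] with y hy using Set.indicator_of_mem hy f
  · rw [Set.indicator_of_notMem hxs]
    refine (hasFDerivAt_const (0 : F) x).congr_of_eventuallyEq ?_
    filter_upwards [hs.isOpen_compl.mem_nhds hxs] with y hy using Set.indicator_of_notMem hy f

section WirtingerDerivatives

lemma norm_wirtingerCLM_le (p q : ℂ) : ‖wirtingerCLM p q‖ ≤ ‖p‖ + ‖q‖ := by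
  refine ContinuousLinearMap.opNorm_le_bound _ (by positivity) fun v => ?_
  rw [wirtingerCLM_apply, add_mul]
  exact norm_add_le_of_le (norm_mul_le p v) (by simp)

lemma wirtingerCLM_inj {p q p' q' : ℂ} (h : wirtingerCLM p q = wirtingerCLM p' q') :
    p = p' ∧ q = q' := by
  have h_one := DFunLike.congr_fun h 1
  have h_I := DFunLike.congr_fun h I
  simp only [wirtingerCLM_apply, map_one, conj_I] at h_one h_I
  constructor
  · linear_combination h_one / 2 - I / 2 * h_I + (p - p' - q + q') / 2 * I_mul_I
  · linear_combination h_one / 2 + I / 2 * h_I - (p - p' - q + q') / 2 * I_mul_I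

/-- `f` is continuously differentiable on `s` with Wirtinger derivatives `∂f = p` and `∂̄f = q`.
Derivatives are taken within `s`, so that for a closed disk they are one-sided at the boundary. -/
structure HasWirtingerDerivsOn (f p q : ℂ → ℂ) (s : Set ℂ) : Prop where
  continuousOn_left : ContinuousOn p s
  continuousOn_right : ContinuousOn q s
  hasFDerivWithinAt : ∀ z ∈ s, HasFDerivWithinAt f (wirtingerCLM (p z) (q z)) s z

namespace HasWirtingerDerivsOn

variable {f p q g p' q' : ℂ → ℂ} {s : Set ℂ}

lemma continuousOn (h : HasWirtingerDerivsOn f p q s) : ContinuousOn f s :=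
  fun z hz => (h.hasFDerivWithinAt z hz).continuousWithinAt

lemma congr_left (h : HasWirtingerDerivsOn f p q s) (hp : Set.EqOn p' p s) :
    HasWirtingerDerivsOn f p' q s where
  continuousOn_left := h.continuousOn_left.congr hp
  continuousOn_right := h.continuousOn_right
  hasFDerivWithinAt z hz := hp hz ▸ h.hasFDerivWithinAt z hz

lemma const (c : ℂ) (s : Set ℂ) :
    HasWirtingerDerivsOn (fun _ => c) (fun _ => 0) (fun _ => 0) s where
  continuousOn_left := continuousOn_const
  continuousOn_right := continuousOn_const
  hasFDerivWithinAt z _ := (hasFDerivWithinAt_const c z s).congr_fderiv <| by ext v; simp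

lemma id (s : Set ℂ) : HasWirtingerDerivsOn (fun z => z) (fun _ => 1) (fun _ => 0) s where
  continuousOn_left := continuousOn_const
  continuousOn_right := continuousOn_const
  hasFDerivWithinAt z _ := (hasFDerivWithinAt_id z s).congr_fderiv <| by ext v; simp

lemma add (hf : HasWirtingerDerivsOn f p q s) (hg : HasWirtingerDerivsOn g p' q' s) :
    HasWirtingerDerivsOn (fun z => f z + g z) (fun z => p z + p' z) (fun z => q z + q' z) s where
  continuousOn_left := hf.continuousOn_left.add hg.continuousOn_left
  continuousOn_right := hf.continuousOn_right.add hg.continuousOn_right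
  hasFDerivWithinAt z hz := by
    refine ((hf.hasFDerivWithinAt z hz).add (hg.hasFDerivWithinAt z hz)).congr_fderiv ?_
    ext v
    simp only [add_apply, wirtingerCLM_apply]
    ring

lemma mul (hf : HasWirtingerDerivsOn f p q s) (hg : HasWirtingerDerivsOn g p' q' s) :
    HasWirtingerDerivsOn (fun z => f z * g z) (fun z => p z * g z + f z * p' z)
      (fun z => q z * g z + f z * q' z) s where
  continuousOn_left :=
    (hf.continuousOn_left.mul hg.continuousOn).add (hf.continuousOn.mul hg.continuousOn_left)
  continuousOn_right :=
    (hf.continuousOn_right.mul hg.continuousOn).add (hf.continuousOn.mul hg.continuousOn_right)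
  hasFDerivWithinAt z hz := by
    refine ((hf.hasFDerivWithinAt z hz).mul (hg.hasFDerivWithinAt z hz)).congr_fderiv ?_
    ext v
    simp only [add_apply, smul_apply, wirtingerCLM_apply, smul_eq_mul]
    ring

lemma star (h : HasWirtingerDerivsOn f p q s) :
    HasWirtingerDerivsOn (fun z => conj (f z)) (fun z => conj (q z)) (fun z => conj (p z)) s where
  continuousOn_left := continuous_conj.comp_continuousOn h.continuousOn_right
  continuousOn_right := continuous_conj.comp_continuousOn h.continuousOn_left
  hasFDerivWithinAt z hz := by
    refine ((conjCLE : ℂ →L[ℝ] ℂ).hasFDerivAt.comp_hasFDerivWithinAt z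
      (h.hasFDerivWithinAt z hz)).congr_fderiv ?_
    ext v
    simp [add_comm]

lemma lipschitzOnWith (hs : Convex ℝ s) {A B : ℝ} (h : HasWirtingerDerivsOn f p q s)
    (hp : ∀ z ∈ s, ‖p z‖ ≤ A) (hq : ∀ z ∈ s, ‖q z‖ ≤ B) :
    LipschitzOnWith (A + B).toNNReal f s := by
  refine hs.lipschitzOnWith_of_nnnorm_hasFDerivWithin_le h.hasFDerivWithinAt fun z hz => ?_
  rw [← norm_toNNReal]
  exact Real.toNNReal_le_toNNReal
    ((norm_wirtingerCLM_le _ _).trans (add_le_add (hp z hz) (hq z hz)))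

lemma exists_lipschitzOnWith (hs : Convex ℝ s) (hsc : IsCompact s)
    (h : HasWirtingerDerivsOn f p q s) : ∃ L, LipschitzOnWith L f s := by
  obtain ⟨A, hA⟩ := hsc.exists_bound_of_continuousOn h.continuousOn_left
  obtain ⟨B, hB⟩ := hsc.exists_bound_of_continuousOn h.continuousOn_right
  exact ⟨_, h.lipschitzOnWith hs hA hB⟩

lemma exists_holderBound {α : ℝ} (hα₁ : α < 1) (hs : Convex ℝ s) (hsc : IsCompact s)
    (h : HasWirtingerDerivsOn f p q s) : ∃ B, HolderBound α s B f := by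
  obtain ⟨L, hL⟩ := h.exists_lipschitzOnWith hs hsc
  obtain ⟨B, hB⟩ := hsc.exists_bound_of_continuousOn h.continuousOn
  exact ⟨_, holderBound_of_lipschitzOnWith hα₁
    (fun z hz w hw => dist_eq_norm z w ▸ dist_le_diam_of_mem hsc.isBounded hz hw) hB hL⟩

end HasWirtingerDerivsOn

end WirtingerDerivatives

section BoundaryIdentities

variable {α B C R : ℝ} {f g p q : ℂ → ℂ} {z : ℂ}

lemma Tcg_comp_mul {u : ℂ} (hu : ‖u‖ = 1) (R : ℝ) (g : ℂ → ℂ) (z : ℂ) :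
    Tcg R (fun ζ => g (u * ζ)) z = u * Tcg R g (u * z) := by
  have hu₀ : u ≠ 0 := norm_ne_zero_iff.1 (hu ▸ one_ne_zero)
  rw [Tcg, Tcg, ← setIntegral_closedBall_comp_mul hu R fun ζ => g ζ / (ζ - u * z),
    mul_left_comm, ← integral_const_mul u]
  congr 2
  funext ζ
  rw [← mul_sub]
  field_simp

lemma circleMap_mul_mem_closedBall (θ : ℝ) (hz : z ∈ closedBall 0 R) :
    circleMap 0 1 θ * z ∈ closedBall 0 R := by
  simpa only [mem_closedBall_zero_iff, norm_mul, norm_circleMap_zero_one, one_mul] using hz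

lemma circleMap_zero_one_zero : circleMap 0 1 0 = 1 := by simp [circleMap]

lemma hasDerivAt_comp_circleMap_mul {L : ℂ →L[ℝ] ℂ}
    (hf : HasFDerivWithinAt f L (closedBall 0 R) z) (hz : z ∈ closedBall 0 R) :
    HasDerivAt (fun θ => f (circleMap 0 1 θ * z)) (L (I * z)) 0 := by
  have h_rot : HasDerivAt (fun θ => circleMap 0 1 θ * z) (I * z) 0 := by
    simpa [circleMap_zero_one_zero] using (hasDerivAt_circleMap 0 1 0).mul_const z
  rw [← hasDerivWithinAt_univ] at h_rot ⊢
  exact HasFDerivWithinAt.comp_hasDerivWithinAt (t := closedBall 0 R) 0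
    (by rwa [circleMap_zero_one_zero, one_mul]) h_rot
    fun θ _ => circleMap_mul_mem_closedBall θ hz

lemma HasWirtingerDerivsOn.hasDerivAt_Tcg_rotate
    (h : HasWirtingerDerivsOn g p q (closedBall 0 R)) (hz : z ∈ closedBall 0 R) :
    HasDerivAt (fun θ => Tcg R (fun ζ => g (circleMap 0 1 θ * ζ)) z)
      (I * Tcg R (fun ζ => ζ * p ζ - conj ζ * q ζ) z) 0 := by
  obtain ⟨L, hL⟩ := h.exists_lipschitzOnWith (convex_closedBall 0 R) (isCompact_closedBall 0 R)
  have h_int : ∀ θ, IntegrableOn (fun ζ => g (circleMap 0 1 θ * ζ) / (ζ - z)) (closedBall 0 R) :=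
    fun θ => integrableOn_div_sub (f := fun ζ => g (circleMap 0 1 θ * ζ))
      (h.continuousOn.comp (by fun_prop) fun ζ => circleMap_mul_mem_closedBall θ) hz
  have h_meas : ContinuousOn (fun ζ => I * (ζ * p ζ - conj ζ * q ζ)) (closedBall 0 R) := by
    have := h.continuousOn_left
    have := h.continuousOn_right
    fun_prop
  have h_deriv := (hasDerivAt_integral_of_dominated_loc_of_lip (s := Set.univ) (x₀ := (0 : ℝ))
    (F' := fun ζ => I * (ζ * p ζ - conj ζ * q ζ) / (ζ - z))
    (bound := fun ζ => L * R * ‖(ζ - z)⁻¹‖) Filter.univ_mem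
    (.of_forall fun θ => (h_int θ).aestronglyMeasurable) (h_int 0)
    (integrableOn_div_sub h_meas hz).aestronglyMeasurable
    (ae_restrict_of_forall_mem measurableSet_closedBall fun ζ hζ => ?_)
    ((integrableOn_inv_sub hz).norm.const_mul _)
    (ae_restrict_of_forall_mem measurableSet_closedBall fun ζ hζ => ?_)).2
  · refine (h_deriv.const_mul (-(Real.pi : ℂ)⁻¹)).congr_deriv ?_
    rw [Tcg, mul_left_comm, ← integral_const_mul I]
    simp only [mul_div_assoc]
  · have hR : 0 ≤ R := (norm_nonneg ζ).trans (mem_closedBall_zero_iff.1 hζ)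
    refine LipschitzOnWith.of_dist_le_mul fun θ _ φ _ => ?_
    rw [dist_eq_norm, ← _root_.sub_div, norm_div, div_eq_mul_inv, ← norm_inv, Real.coe_nnabs,
      abs_of_nonneg (by positivity), mul_right_comm]
    gcongr
    calc _ ≤ L * ‖circleMap 0 1 θ * ζ - circleMap 0 1 φ * ζ‖ :=
          hL.norm_sub_le (circleMap_mul_mem_closedBall θ hζ) (circleMap_mul_mem_closedBall φ hζ)
      _ ≤ L * (dist θ φ * R) := by
          rw [← sub_mul, norm_mul, ← dist_eq_norm]
          gcongr
          · simpa using (lipschitzWith_circleMap 0 1).dist_le_mul θ φ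
          · exact mem_closedBall_zero_iff.1 hζ
      _ = L * R * dist θ φ := by ring
  · refine ((hasDerivAt_comp_circleMap_mul (h.hasFDerivWithinAt ζ hζ) hζ).div_const
      (ζ - z)).congr_deriv ?_
    simp only [wirtingerCLM_apply, map_mul, conj_I]
    ring

lemma HasWirtingerDerivsOn.mul_TkOp_zero_eq (hα₀ : 0 < α) (hα₁ : α < 1)
    (h : HasWirtingerDerivsOn g p q (closedBall 0 R)) (hz : z ∈ closedBall 0 R) :
    z * TkOp 0 R g z =
      Tcg R (fun ζ => ζ * p ζ - conj ζ * q ζ) z - Tcg R g z + conj z * g z := by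
  obtain ⟨B, hB⟩ :=
    h.exists_holderBound hα₁ (convex_closedBall 0 R) (isCompact_closedBall 0 R)
  -- Differentiate `T (g ∘ rotation) = rotation * T g ∘ rotation` in the angle of rotation.
  have h_left := h.hasDerivAt_Tcg_rotate hz
  simp only [Tcg_comp_mul (norm_circleMap_zero_one _)] at h_left
  have h_right := (hasDerivAt_circleMap 0 1 0).mul
    (hasDerivAt_comp_circleMap_mul (hB.hasFDerivWithinAt_Tcg hα₀ hα₁ hz) hz)
  have h_eq := h_left.unique h_right
  simp only [wirtingerCLM_apply, map_mul, conj_I, circleMap_zero_one_zero, one_mul] at h_eq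
  exact mul_left_cancel₀ I_ne_zero (by linear_combination -h_eq)

section Translation

variable {F : Type*} [NormedAddCommGroup F] [NormedSpace ℂ F] {s : Set ℂ}

lemma inv_smul_indicator_add (s : Set ℂ) (g : ℂ → F) (z w : ℂ) :
    w⁻¹ • s.indicator g (w + z) = s.indicator (fun ζ => (ζ - z)⁻¹ • g ζ) (w + z) := by
  by_cases h : w + z ∈ s <;> simp [h]

lemma integrable_inv_smul_indicator_add (hs : MeasurableSet s) {g : ℂ → F}
    (hg : IntegrableOn (fun ζ => (ζ - z)⁻¹ • g ζ) s) :
    Integrable fun w => w⁻¹ • s.indicator g (w + z) := by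
  simp only [inv_smul_indicator_add]
  exact (hg.integrable_indicator hs).comp_add_right z

lemma integral_inv_smul_indicator_add (hs : MeasurableSet s) (g : ℂ → F) (z : ℂ) :
    ∫ w, w⁻¹ • s.indicator g (w + z) = ∫ ζ in s, (ζ - z)⁻¹ • g ζ := by
  simp only [inv_smul_indicator_add]
  rw [integral_add_right_eq_self (s.indicator fun ζ => (ζ - z)⁻¹ • g ζ), integral_indicator hs]

end Translation

lemma Tcg_eq_integral_inv_smul_indicator_add (R : ℝ) (f : ℂ → ℂ) (z : ℂ) :
    Tcg R f z =
      -(Real.pi : ℂ)⁻¹ * ∫ w, w⁻¹ • (closedBall 0 R).indicator f (w + z) := by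
  rw [integral_inv_smul_indicator_add measurableSet_closedBall, Tcg]
  simp only [smul_eq_mul, div_eq_inv_mul]

lemma integral_inv_sub_smul_wirtingerCLM (hp : ContinuousOn p (closedBall 0 R))
    (hq : ContinuousOn q (closedBall 0 R)) (hz : z ∈ closedBall 0 R) :
    IntegrableOn (fun ζ => (ζ - z)⁻¹ • wirtingerCLM (p ζ) (q ζ)) (closedBall 0 R) ∧
    -(Real.pi : ℂ)⁻¹ • ∫ ζ in closedBall 0 R, (ζ - z)⁻¹ • wirtingerCLM (p ζ) (q ζ) =
      wirtingerCLM (Tcg R p z) (Tcg R q z) := by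
  have h_eq : ∀ ζ, (ζ - z)⁻¹ • wirtingerCLM (p ζ) (q ζ) =
      (p ζ / (ζ - z)) • ContinuousLinearMap.id ℝ ℂ +
        (q ζ / (ζ - z)) • (conjCLE : ℂ →L[ℝ] ℂ) := fun ζ => by
    simp only [wirtingerCLM, smul_add, smul_smul, div_eq_inv_mul]
  have h_left := (integrableOn_div_sub hp hz).smul_const (ContinuousLinearMap.id ℝ ℂ)
  have h_right := (integrableOn_div_sub hq hz).smul_const (conjCLE : ℂ →L[ℝ] ℂ)
  simp only [h_eq]
  refine ⟨h_left.add h_right, ?_⟩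
  rw [integral_add h_left h_right, integral_smul_const, integral_smul_const, smul_add, smul_smul,
    smul_smul, wirtingerCLM, Tcg, Tcg]

lemma lipschitzOnWith_inv_smul_indicator_add {L : ℝ≥0}
    (hL : LipschitzWith L ((closedBall 0 R).indicator f)) (hz : z ∈ closedBall 0 R) (w : ℂ) :
    LipschitzOnWith
      (Real.nnabs (L * (closedBall 0 (2 * R + 1)).indicator (fun w => ‖w‖ ^ (-1 : ℝ)) w))
      (fun x => w⁻¹ • (closedBall 0 R).indicator f (w + x)) (ball z 1) := by
  refine LipschitzOnWith.of_dist_le_mul fun x hx y hy => ?_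
  by_cases hw : w ∈ closedBall 0 (2 * R + 1)
  · rw [Set.indicator_of_mem hw, Real.coe_nnabs, abs_of_nonneg (by positivity), dist_smul₀,
      norm_inv, Real.rpow_neg_one, mul_comm (L : ℝ), mul_assoc]
    gcongr
    simpa using hL.dist_le_mul (w + x) (w + y)
  · have h_notMem : ∀ x ∈ ball z 1, w + x ∉ closedBall 0 R := fun x hx h_mem => hw <| by
      rw [mem_closedBall_zero_iff] at hz h_mem ⊢
      rw [mem_ball_iff_norm] at hx
      calc ‖w‖ = ‖(w + x) - (x - z) - z‖ := by ring_nf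
        _ ≤ R + 1 + R := norm_sub_le_of_le (norm_sub_le_of_le h_mem hx.le) hz
        _ = 2 * R + 1 := by ring
    rw [Set.indicator_of_notMem (h_notMem x hx), Set.indicator_of_notMem (h_notMem y hy), dist_self]
    positivity

lemma HasWirtingerDerivsOn.hasFDerivAt_Tcg (h : HasWirtingerDerivsOn f p q (closedBall 0 R))
    (h₀ : ∀ ζ ∈ sphere 0 R, f ζ = 0) (hz : z ∈ closedBall 0 R) :
    HasFDerivAt (Tcg R f) (wirtingerCLM (Tcg R p z) (Tcg R q z)) z := by
  obtain ⟨L, hL⟩ := h.exists_lipschitzOnWith (convex_closedBall 0 R) (isCompact_closedBall 0 R)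
  have h_lip := lipschitzWith_indicator isClosed_closedBall hL fun ζ hζ =>
    h₀ ζ (frontier_closedBall_subset_sphere hζ)
  obtain ⟨h_int, h_eq⟩ := integral_inv_sub_smul_wirtingerCLM h.continuousOn_left
    h.continuousOn_right hz
  have h_kernel := (integrableOn_closedBall_norm_rpow (volume : Measure ℂ)
    (neg_finrank_complex_lt (by norm_num : -2 < (-1 : ℝ))) (2 * R + 1)).integrable_indicator
    measurableSet_closedBall
  have h_frontier : volume (frontier (closedBall (0 : ℂ) R)) = 0 :=
    (convex_closedBall 0 R).addHaar_frontier volume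
  have h_translate : ∀ᵐ w : ℂ, w + z ∉ frontier (closedBall 0 R) :=
    measure_eq_zero_iff_ae_notMem.1 ((measure_preimage_add_right volume z _).trans h_frontier)
  have h_deriv := (hasFDerivAt_integral_of_dominated_loc_of_lip (𝕜 := ℝ)
    (F := fun x w => w⁻¹ • (closedBall 0 R).indicator f (w + x))
    (F' := fun w => w⁻¹ • (closedBall 0 R).indicator (fun ζ => wirtingerCLM (p ζ) (q ζ)) (w + z))
    (bound := fun w => L * (closedBall 0 (2 * R + 1)).indicator (fun w => ‖w‖ ^ (-1 : ℝ)) w)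
    (ball_mem_nhds z one_pos)
    (.of_forall fun x => measurable_inv.aestronglyMeasurable.smul
      (h_lip.continuous.comp (by fun_prop)).aestronglyMeasurable)
    (integrable_inv_smul_indicator_add measurableSet_closedBall ?_)
    (integrable_inv_smul_indicator_add measurableSet_closedBall h_int).aestronglyMeasurable
    (.of_forall (lipschitzOnWith_inv_smul_indicator_add h_lip hz)) (h_kernel.const_mul _) ?_).2
  · rw [integral_inv_smul_indicator_add measurableSet_closedBall] at h_deriv
    rw [← h_eq]
    refine (h_deriv.const_smul (-(Real.pi : ℂ)⁻¹)).congr_of_eventuallyEq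
      (.of_forall fun x => ?_)
    rw [Tcg_eq_integral_inv_smul_indicator_add]
    rfl
  · simpa only [smul_eq_mul, div_eq_inv_mul] using integrableOn_div_sub h.continuousOn hz
  · filter_upwards [h_translate] with w hw
    exact ((hasFDerivAt_comp_add_left w).2 (hasFDerivAt_indicator isClosed_closedBall
      h.hasFDerivWithinAt hw)).const_smul w⁻¹

lemma HasWirtingerDerivsOn.TkOp_zero_eq_Tcg (hα₀ : 0 < α) (hα₁ : α < 1) (hR : 0 < R)
    (h : HasWirtingerDerivsOn f p q (closedBall 0 R)) (h₀ : ∀ ζ ∈ sphere 0 R, f ζ = 0)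
    (hz : z ∈ closedBall 0 R) : TkOp 0 R f z = Tcg R p z := by
  obtain ⟨B, hB⟩ :=
    h.exists_holderBound hα₁ (convex_closedBall 0 R) (isCompact_closedBall 0 R)
  have h_unique : UniqueDiffWithinAt ℝ (closedBall 0 R) z :=
    uniqueDiffWithinAt_convex (convex_closedBall 0 R)
      (by simpa [interior_closedBall _ hR.ne'] using hR) (subset_closure hz)
  exact (wirtingerCLM_inj (h_unique.eq (hB.hasFDerivWithinAt_Tcg hα₀ hα₁ hz)
    (h.hasFDerivAt_Tcg h₀ hz).hasFDerivWithinAt)).1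

lemma Tcg_add (hf : ContinuousOn f (closedBall 0 R)) (hg : ContinuousOn g (closedBall 0 R))
    (hz : z ∈ closedBall 0 R) : Tcg R (fun ζ => f ζ + g ζ) z = Tcg R f z + Tcg R g z := by
  simp only [Tcg, add_div]
  rw [integral_add (integrableOn_div_sub hf hz) (integrableOn_div_sub hg hz), mul_add]

lemma TkOp_zero_add (hα₀ : 0 < α) (hf : HolderBound α (closedBall 0 R) B f)
    (hg : HolderBound α (closedBall 0 R) C g) (hz : z ∈ closedBall 0 R) :
    TkOp 0 R (fun ζ => f ζ + g ζ) z = TkOp 0 R f z + TkOp 0 R g z := by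
  simp only [TkOp_zero_apply, add_sub_add_comm, add_div]
  rw [integral_add (hf.integrableOn_sub_div_sq hα₀ hz) (hg.integrableOn_sub_div_sq hα₀ hz),
    mul_add]

lemma TkOp_zero_const_mul (R : ℝ) (c : ℂ) (f : ℂ → ℂ) (z : ℂ) :
    TkOp 0 R (fun ζ => c * f ζ) z = c * TkOp 0 R f z := by
  simp only [TkOp_zero_apply, ← mul_sub, mul_div_assoc, integral_const_mul]
  ring

lemma TkOp_zero_id_mul (hα₀ : 0 < α) (h : HolderBound α (closedBall 0 R) B f)
    (hz : z ∈ closedBall 0 R) :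
    TkOp 0 R (fun ζ => ζ * f ζ) z = z * TkOp 0 R f z + Tcg R f z := by
  have h_T := integrableOn_div_sub (h.continuousOn hα₀) hz
  have h_second := (h.integrableOn_sub_div_sq hα₀ hz).const_mul z
  rw [TkOp_zero_apply, TkOp_zero_apply, Tcg, mul_left_comm, ← mul_add, ← integral_const_mul z,
    ← integral_add h_second h_T]
  congr 1
  refine integral_congr_ae ?_
  filter_upwards [ae_restrict_ne _ z] with ζ hζ
  have := sub_ne_zero.2 hζ
  field_simp
  ring

-- Split `R² f = (R² - |ζ|²) f + ζ (ζ̄ f)`: the first summand vanishes on the circle, and the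
-- second is handled by differentiating along rotations.
lemma HasWirtingerDerivsOn.sq_mul_TkOp_zero_eq (hα₀ : 0 < α) (hα₁ : α < 1) (hR : 0 < R)
    (h : HasWirtingerDerivsOn f p q (closedBall 0 R)) (hz : z ∈ closedBall 0 R) :
    R ^ 2 * TkOp 0 R f z =
      Tcg R (fun ζ => R ^ 2 * p ζ + -2 * (conj ζ * f ζ) + -1 * (conj ζ * (conj ζ * q ζ))) z +
        conj z * (conj z * f z) := by
  have hG := (HasWirtingerDerivsOn.id (closedBall 0 R)).star.mul h
  have hH := ((HasWirtingerDerivsOn.const (R ^ 2 : ℂ) (closedBall 0 R)).add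
    (.mul (.const (-1) _) (.mul (.id _) (HasWirtingerDerivsOn.id _).star))).mul h
  have hζG := (HasWirtingerDerivsOn.id (closedBall 0 R)).mul hG
  have h_conv := convex_closedBall (0 : ℂ) R
  have h_cpt := isCompact_closedBall (0 : ℂ) R
  obtain ⟨BG, hBG⟩ := hG.exists_holderBound hα₁ h_conv h_cpt
  obtain ⟨BH, hBH⟩ := hH.exists_holderBound hα₁ h_conv h_cpt
  obtain ⟨BζG, hBζG⟩ := hζG.exists_holderBound hα₁ h_conv h_cpt
  have h_sphere : ∀ ζ ∈ sphere (0 : ℂ) R, (R ^ 2 + -1 * (ζ * conj ζ)) * f ζ = 0 := fun ζ hζ => by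
    rw [mul_conj, normSq_eq_norm_sq, mem_sphere_zero_iff_norm.1 hζ]
    push_cast
    ring
  calc R ^ 2 * TkOp 0 R f z
      = TkOp 0 R (fun ζ => (R ^ 2 + -1 * (ζ * conj ζ)) * f ζ + ζ * (conj ζ * f ζ)) z := by
        rw [← TkOp_zero_const_mul]
        congr 1
        funext ζ
        ring
    _ = TkOp 0 R (fun ζ => (R ^ 2 + -1 * (ζ * conj ζ)) * f ζ) z +
          (z * TkOp 0 R (fun ζ => conj ζ * f ζ) z + Tcg R (fun ζ => conj ζ * f ζ) z) := by
        rw [TkOp_zero_add hα₀ hBH hBζG hz, TkOp_zero_id_mul hα₀ hBG hz]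
    _ = _ := by
        rw [hH.TkOp_zero_eq_Tcg hα₀ hα₁ hR h_sphere hz, hG.mul_TkOp_zero_eq hα₀ hα₁ hz,
          sub_add_eq_add_sub, sub_add_cancel, ← add_assoc, ← Tcg_add hH.continuousOn_left ?_ hz]
        · refine congrArg₂ (· + ·) (congrArg (Tcg R · z) (funext fun ζ => ?_)) (by ring)
          simp only [map_one, map_zero]
          ring
        · have := hG.continuousOn_left
          have := hG.continuousOn_right
          fun_prop

end BoundaryIdentities

section CkHolderBound

/-- `f` is of class `C^{k+α}` on the closed disk of radius `R`, with all derivatives of order at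
most `k` bounded by `B` and those of order `k` also `α`-Hölder with constant `B`. The derivatives
are witnessed by recursively chosen Wirtinger derivatives within the closed disk. -/
def CkHolderBound : ℕ → ℝ → ℝ → ℝ → (ℂ → ℂ) → Prop
  | 0, α, R, B, f => HolderBound α (closedBall 0 R) B f
  | k + 1, α, R, B, f => (∀ z ∈ closedBall 0 R, ‖f z‖ ≤ B) ∧
      ∃ p q, HasWirtingerDerivsOn f p q (closedBall 0 R) ∧
        CkHolderBound k α R B p ∧ CkHolderBound k α R B q

/-- The operator `S` maps `C^{k+α}` of the closed disk of radius `R` boundedly into `C^{l+α}`. -/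
def MapsCkHolder (k l : ℕ) (α R : ℝ) (S : (ℂ → ℂ) → ℂ → ℂ) : Prop :=
  ∃ C, ∀ B f, CkHolderBound k α R B f → CkHolderBound l α R (C * B) (S f)

variable {k l m : ℕ} {α A B C R : ℝ} {f g p q : ℂ → ℂ} {S S' : (ℂ → ℂ) → ℂ → ℂ}

namespace CkHolderBound

lemma norm_le (h : CkHolderBound k α R B f) : ∀ z ∈ closedBall 0 R, ‖f z‖ ≤ B :=
  match k, h with
  | 0, h => HolderBound.norm_le h
  | _ + 1, h => h.1

lemma nonneg (hR : 0 ≤ R) (h : CkHolderBound k α R B f) : 0 ≤ B :=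
  (norm_nonneg _).trans (h.norm_le 0 (mem_closedBall_self hR))

lemma mono (h : CkHolderBound k α R B f) (hBC : B ≤ C) : CkHolderBound k α R C f := by
  induction k generalizing f with
  | zero => exact HolderBound.mono h hBC
  | succ k ih =>
    obtain ⟨h_sup, p, q, h_deriv, hp, hq⟩ := h
    exact ⟨fun z hz => (h_sup z hz).trans hBC, p, q, h_deriv, ih hp, ih hq⟩

lemma succ {B₀ B₁ B₂ : ℝ} (h_sup : ∀ z ∈ closedBall 0 R, ‖f z‖ ≤ B₀)
    (h_deriv : HasWirtingerDerivsOn f p q (closedBall 0 R)) (hp : CkHolderBound k α R B₁ p)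
    (hq : CkHolderBound k α R B₂ q) : CkHolderBound (k + 1) α R (max B₀ (max B₁ B₂)) f :=
  ⟨fun z hz => (h_sup z hz).trans (le_max_left _ _), p, q, h_deriv,
    hp.mono (le_max_of_le_right (le_max_left _ _)),
    hq.mono (le_max_of_le_right (le_max_right _ _))⟩

lemma add (hf : CkHolderBound k α R B f) (hg : CkHolderBound k α R C g) :
    CkHolderBound k α R (B + C) (fun z => f z + g z) := by
  induction k generalizing f g with
  | zero => exact HolderBound.add hf hg
  | succ k ih =>
    obtain ⟨hf_sup, p, q, hf_deriv, hp, hq⟩ := hf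
    obtain ⟨hg_sup, p', q', hg_deriv, hp', hq'⟩ := hg
    exact ⟨fun z hz => norm_add_le_of_le (hf_sup z hz) (hg_sup z hz), _, _,
      hf_deriv.add hg_deriv, ih hp hp', ih hq hq'⟩

lemma star (h : CkHolderBound k α R B f) : CkHolderBound k α R B (fun z => conj (f z)) := by
  induction k generalizing f with
  | zero => exact HolderBound.star h
  | succ k ih =>
    obtain ⟨h_sup, p, q, h_deriv, hp, hq⟩ := h
    exact ⟨fun z hz => (RCLike.norm_conj (f z)).trans_le (h_sup z hz), _, _, h_deriv.star,
      ih hq, ih hp⟩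

lemma const (k : ℕ) (α R : ℝ) (c : ℂ) : CkHolderBound k α R ‖c‖ (fun _ => c) := by
  induction k generalizing c with
  | zero => exact ⟨fun _ _ => le_rfl, fun z _ w _ => by rw [sub_self, norm_zero]; positivity⟩
  | succ k ih =>
    have h_zero := (ih 0).mono (norm_zero.trans_le (norm_nonneg c))
    exact ⟨fun _ _ => le_rfl, _, _, .const c _, h_zero, h_zero⟩

end CkHolderBound

namespace MapsCkHolder

lemma comp (hS : MapsCkHolder l m α R S) (hS' : MapsCkHolder k l α R S') :
    MapsCkHolder k m α R (S ∘ S') := by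
  obtain ⟨C, hC⟩ := hS
  obtain ⟨C', hC'⟩ := hS'
  exact ⟨C * C', fun B f hf => mul_assoc C C' B ▸ hC _ _ (hC' B f hf)⟩

lemma iterate (hS : ∀ k, MapsCkHolder k (k + 1) α R S) (k n : ℕ) :
    MapsCkHolder k (k + n) α R S^[n] := by
  induction n with
  | zero => exact ⟨1, fun B f hf => by rwa [one_mul]⟩
  | succ n ih => rw [Function.iterate_succ']; exact (hS (k + n)).comp ih

lemma star : MapsCkHolder k k α R (fun f z => conj (f z)) :=
  ⟨1, fun B f hf => by rw [one_mul]; exact hf.star⟩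

lemma of_succ (hα₁ : α < 1) (hR : 0 ≤ R) (k : ℕ) : MapsCkHolder (k + 1) k α R id := by
  induction k with
  | zero =>
    refine ⟨max 1 (2 * (2 * R) ^ (1 - α)), fun B f h => ?_⟩
    have hB : 0 ≤ B := h.nonneg hR
    obtain ⟨h_sup, p, q, h_deriv, hp, hq⟩ := h
    have h_lip := h_deriv.lipschitzOnWith (convex_closedBall 0 R) hp.norm_le hq.norm_le
    have h_dist : ∀ z ∈ closedBall (0 : ℂ) R, ∀ w ∈ closedBall 0 R, ‖z - w‖ ≤ 2 * R :=
      fun z hz w hw => two_mul R ▸ norm_sub_le_of_le (mem_closedBall_zero_iff.1 hz)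
        (mem_closedBall_zero_iff.1 hw)
    refine (holderBound_of_lipschitzOnWith hα₁ h_dist h_sup h_lip).mono (le_of_eq ?_)
    rw [Real.coe_toNNReal _ (by positivity), max_mul_of_nonneg _ _ hB, one_mul]
    ring_nf
  | succ k ih =>
    obtain ⟨C, hC⟩ := ih
    refine ⟨max 1 (max C C), fun B f h => ?_⟩
    have hB : 0 ≤ B := h.nonneg hR
    obtain ⟨h_sup, p, q, h_deriv, hp, hq⟩ := h
    rw [max_mul_of_nonneg _ _ hB, max_mul_of_nonneg _ _ hB, one_mul]
    exact .succ h_sup h_deriv (hC B p hp) (hC B q hq)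

end MapsCkHolder

namespace CkHolderBound

lemma exists_id (hα₁ : α < 1) (hR : 0 ≤ R) (k : ℕ) :
    ∃ A, CkHolderBound k α R A (fun z => z) := by
  obtain ⟨C, hC⟩ := MapsCkHolder.of_succ hα₁ hR k
  exact ⟨_, hC _ _ (.succ (fun z hz => mem_closedBall_zero_iff.1 hz) (.id _)
    (.const k α R 1) (.const k α R 0))⟩

lemma exists_mul (hα₁ : α < 1) (hR : 0 ≤ R) (k : ℕ) :
    ∃ C, ∀ A B f g, CkHolderBound k α R A f → CkHolderBound k α R B g →
      CkHolderBound k α R (C * (A * B)) (fun z => f z * g z) := by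
  induction k with
  | zero =>
    exact ⟨2, fun A B f g hf hg => (HolderBound.mul hf hg).mono (mul_assoc 2 A B).le⟩
  | succ k ih =>
    obtain ⟨C, h_mul⟩ := ih
    obtain ⟨D, h_down⟩ := MapsCkHolder.of_succ hα₁ hR k
    refine ⟨max 1 (2 * C * D), fun A B f g hf hg => ?_⟩
    have hA : 0 ≤ A := hf.nonneg hR
    have hB : 0 ≤ B := hg.nonneg hR
    have hf_down := h_down A f hf
    have hg_down := h_down B g hg
    obtain ⟨hf_sup, p, q, hf_deriv, hp, hq⟩ := hf
    obtain ⟨hg_sup, p', q', hg_deriv, hp', hq'⟩ := hg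
    refine (CkHolderBound.succ (fun z hz => norm_mul_le_of_le (hf_sup z hz) (hg_sup z hz))
      (hf_deriv.mul hg_deriv)
      ((h_mul _ _ _ _ hp hg_down).add (h_mul _ _ _ _ hf_down hp'))
      ((h_mul _ _ _ _ hq hg_down).add (h_mul _ _ _ _ hf_down hq'))).mono (le_of_eq ?_)
    rw [max_self, max_mul_of_nonneg _ _ (by positivity), one_mul]
    ring_nf

end CkHolderBound

namespace MapsCkHolder

lemma mul_left (hα₁ : α < 1) (hR : 0 ≤ R) (hg : CkHolderBound k α R A g) :
    MapsCkHolder k k α R (fun f z => g z * f z) := by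
  obtain ⟨C, hC⟩ := CkHolderBound.exists_mul hα₁ hR k
  exact ⟨C * A, fun B f hf => mul_assoc C A B ▸ hC A B g f hg hf⟩

lemma const_mul (hα₁ : α < 1) (hR : 0 ≤ R) (k : ℕ) (c : ℂ) :
    MapsCkHolder k k α R (fun f z => c * f z) :=
  mul_left hα₁ hR (.const k α R c)

lemma conj_mul (hα₁ : α < 1) (hR : 0 ≤ R) (k : ℕ) :
    MapsCkHolder k k α R (fun f z => conj z * f z) := by
  obtain ⟨A, hA⟩ := CkHolderBound.exists_id hα₁ hR k
  exact mul_left hα₁ hR hA.star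

end MapsCkHolder

end CkHolderBound

section RegularityGain

variable {k : ℕ} {α B R : ℝ} {f p q : ℂ → ℂ}

lemma HolderBound.hasWirtingerDerivsOn_Tcg (hα₀ : 0 < α) (hα₁ : α < 1)
    (h : HolderBound α (closedBall 0 R) B f) :
    HasWirtingerDerivsOn (Tcg R f) (TkOp 0 R f) f (closedBall 0 R) := by
  obtain ⟨C, -, hC⟩ := exists_holderBound_TkOp_zero hα₀ hα₁ R
  exact ⟨(hC f B h).continuousOn hα₀, h.continuousOn hα₀,
    fun z hz => h.hasFDerivWithinAt_Tcg hα₀ hα₁ hz⟩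

lemma HasWirtingerDerivsOn.Tcg (hα₀ : 0 < α) (hα₁ : α < 1) (hR : 0 < R)
    (h : HasWirtingerDerivsOn f p q (closedBall 0 R)) :
    HasWirtingerDerivsOn (Tcg R f) (fun z => ((R : ℂ) ^ 2)⁻¹ *
      (Tcg R (fun ζ => R ^ 2 * p ζ + -2 * (conj ζ * f ζ) + -1 * (conj ζ * (conj ζ * q ζ))) z +
        conj z * (conj z * f z))) f (closedBall 0 R) := by
  obtain ⟨B, hB⟩ :=
    h.exists_holderBound hα₁ (convex_closedBall 0 R) (isCompact_closedBall 0 R)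
  refine (hB.hasWirtingerDerivsOn_Tcg hα₀ hα₁).congr_left fun z hz => ?_
  have hR₀ : (R : ℂ) ^ 2 ≠ 0 := pow_ne_zero 2 (ofReal_ne_zero.2 hR.ne')
  rw [← h.sq_mul_TkOp_zero_eq hα₀ hα₁ hR hz, inv_mul_cancel_left₀ hR₀]

lemma mapsCkHolder_zero_one_Tcg (hα₀ : 0 < α) (hα₁ : α < 1) (hR : 0 ≤ R) :
    MapsCkHolder 0 1 α R (Tcg R) := by
  obtain ⟨C₀, -, h_sup⟩ := exists_norm_Tcg_le R
  obtain ⟨C₁, -, h_TkOp⟩ := exists_holderBound_TkOp_zero hα₀ hα₁ R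
  refine ⟨max C₀ (max C₁ 1), fun B f h => ?_⟩
  have hB : 0 ≤ B := h.nonneg hR
  rw [max_mul_of_nonneg _ _ hB, max_mul_of_nonneg _ _ hB, one_mul]
  exact .succ (h_sup f B h.norm_le) (HolderBound.hasWirtingerDerivsOn_Tcg hα₀ hα₁ h)
    (h_TkOp f B h) h

lemma MapsCkHolder.Tcg_succ (hα₀ : 0 < α) (hα₁ : α < 1) (hR : 0 < R)
    (hT : MapsCkHolder k (k + 1) α R (Tcg R)) :
    MapsCkHolder (k + 1) (k + 2) α R (Tcg R) := by
  obtain ⟨C₀, -, h_sup⟩ := exists_norm_Tcg_le R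
  obtain ⟨C₁, h_T⟩ := hT
  obtain ⟨D₁, hp_term⟩ := MapsCkHolder.const_mul hα₁ hR.le k (R ^ 2 : ℂ)
  obtain ⟨D₂, hf_term⟩ := (MapsCkHolder.const_mul hα₁ hR.le k (-2)).comp
    ((MapsCkHolder.conj_mul hα₁ hR.le k).comp (.of_succ hα₁ hR.le k))
  obtain ⟨D₃, hq_term⟩ := (MapsCkHolder.const_mul hα₁ hR.le k (-1)).comp
    ((MapsCkHolder.conj_mul hα₁ hR.le k).comp (.conj_mul hα₁ hR.le k))
  obtain ⟨D₄, h_boundary⟩ := (MapsCkHolder.conj_mul hα₁ hR.le (k + 1)).comp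
    (.conj_mul hα₁ hR.le (k + 1))
  obtain ⟨D₅, h_scale⟩ := MapsCkHolder.const_mul hα₁ hR.le (k + 1) ((R : ℂ) ^ 2)⁻¹
  refine ⟨max C₀ (max (D₅ * (C₁ * (D₁ + D₂ + D₃) + D₄)) 1), fun B f h => ?_⟩
  have hB : 0 ≤ B := h.nonneg hR.le
  obtain ⟨-, p, q, h_deriv, hp, hq⟩ := id h
  have h_left := h_scale _ _ ((h_T _ _ (((hp_term B p hp).add (hf_term B f h)).add
    (hq_term B q hq))).add (h_boundary B f h))
  rw [max_mul_of_nonneg _ _ hB, max_mul_of_nonneg _ _ hB, one_mul]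
  refine .succ (h_sup f B h.norm_le) (h_deriv.Tcg hα₀ hα₁ hR) (h_left.mono (le_of_eq ?_)) h
  ring

lemma mapsCkHolder_Tcg (hα₀ : 0 < α) (hα₁ : α < 1) (hR : 0 < R) (k : ℕ) :
    MapsCkHolder k (k + 1) α R (Tcg R) := by
  induction k with
  | zero => exact mapsCkHolder_zero_one_Tcg hα₀ hα₁ hR.le
  | succ k ih => exact ih.Tcg_succ hα₀ hα₁ hR

lemma mapsCkHolder_Tcgbar (hα₀ : 0 < α) (hα₁ : α < 1) (hR : 0 < R) (k : ℕ) :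
    MapsCkHolder k (k + 1) α R (Tcgbar R) :=
  MapsCkHolder.star.comp ((mapsCkHolder_Tcg hα₀ hα₁ hR k).comp .star)

lemma mapsCkHolder_iterate_Tcg_Tcgbar (hα₀ : 0 < α) (hα₁ : α < 1) (hR : 0 < R) (k μ ν : ℕ) :
    MapsCkHolder k (k + μ + ν) α R ((Tcg R)^[ν] ∘ (Tcgbar R)^[μ]) :=
  (MapsCkHolder.iterate (mapsCkHolder_Tcg hα₀ hα₁ hR) (k + μ) ν).comp
    (.iterate (mapsCkHolder_Tcgbar hα₀ hα₁ hR) k μ)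

end RegularityGain

section WirtingerDerivatives

variable {i j k n : ℕ} {α B R : ℝ} {f g : ℂ → ℂ} {p q z : ℂ} {s : Set ℂ} {S : (ℂ → ℂ) → ℂ → ℂ}

lemma wD_eq_of_hasFDerivAt (h : HasFDerivAt f (wirtingerCLM p q) z) : wD f z = p := by
  simp only [wD, h.fderiv, wirtingerCLM_apply, map_one, conj_I]
  linear_combination (q - p) / 2 * I_mul_I

lemma wDbar_eq_of_hasFDerivAt (h : HasFDerivAt f (wirtingerCLM p q) z) : wDbar f z = q := by
  simp only [wDbar, h.fderiv, wirtingerCLM_apply, map_one, conj_I]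
  linear_combination (p - q) / 2 * I_mul_I

lemma eqOn_wD (hs : IsOpen s) (h : Set.EqOn f g s) : Set.EqOn (wD f) (wD g) s := fun z hz => by
  simp only [wD, (h.eventuallyEq_of_mem (hs.mem_nhds hz)).fderiv_eq]

lemma eqOn_wDbar (hs : IsOpen s) (h : Set.EqOn f g s) : Set.EqOn (wDbar f) (wDbar g) s :=
  fun z hz => by simp only [wDbar, (h.eventuallyEq_of_mem (hs.mem_nhds hz)).fderiv_eq]

lemma eqOn_iterate (hS : ∀ f g, Set.EqOn f g s → Set.EqOn (S f) (S g) s) (n : ℕ)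
    (h : Set.EqOn f g s) : Set.EqOn (S^[n] f) (S^[n] g) s := by
  induction n generalizing f g with
  | zero => exact h
  | succ _ ih => exact ih (hS f g h)

lemma HasWirtingerDerivsOn.hasFDerivAt {p q : ℂ → ℂ}
    (h : HasWirtingerDerivsOn f p q (closedBall 0 R)) :
    ∀ z ∈ ball 0 R, HasFDerivAt f (wirtingerCLM (p z) (q z)) z := fun z hz =>
  (h.hasFDerivWithinAt z (ball_subset_closedBall hz)).hasFDerivAt
    (Filter.mem_of_superset (isOpen_ball.mem_nhds hz) ball_subset_closedBall)

namespace CkHolderBound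

lemma continuousOn (hα₀ : 0 < α) (h : CkHolderBound k α R B f) :
    ContinuousOn f (closedBall 0 R) :=
  match k, h with
  | 0, h => HolderBound.continuousOn hα₀ h
  | _ + 1, ⟨_, _, _, h_deriv, _⟩ => h_deriv.continuousOn

lemma contDiffOn (hα₀ : 0 < α) (h : CkHolderBound k α R B f) : ContDiffOn ℝ k f (ball 0 R) := by
  induction k generalizing f with
  | zero => exact contDiffOn_zero.2 ((h.continuousOn hα₀).mono ball_subset_closedBall)
  | succ k ih =>
    obtain ⟨-, p, q, h_deriv, hp, hq⟩ := h
    have h_wirtinger : ContDiffOn ℝ k (fun z => wirtingerCLM (p z) (q z)) (ball 0 R) :=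
      ((ih hp).smul contDiffOn_const).add ((ih hq).smul contDiffOn_const)
    push_cast
    refine (contDiffOn_succ_iff_fderiv_of_isOpen isOpen_ball).2
      ⟨fun z hz => (h_deriv.hasFDerivAt z hz).differentiableAt.differentiableWithinAt, by simp,
        h_wirtinger.congr fun z hz => (h_deriv.hasFDerivAt z hz).fderiv⟩

lemma exists_eqOn_iterate (hS : ∀ f g, Set.EqOn f g (ball 0 R) → Set.EqOn (S f) (S g) (ball 0 R))
    (hS_bound : ∀ k f, CkHolderBound (k + 1) α R B f →
      ∃ g, CkHolderBound k α R B g ∧ Set.EqOn (S f) g (ball 0 R))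
    (h : CkHolderBound (k + n) α R B f) :
    ∃ g, CkHolderBound k α R B g ∧ Set.EqOn (S^[n] f) g (ball 0 R) := by
  induction n generalizing f with
  | zero => exact ⟨f, h, Set.eqOn_refl f _⟩
  | succ n ih =>
    obtain ⟨g₁, hg₁, h_eq₁⟩ := hS_bound _ f h
    obtain ⟨g, hg, h_eq⟩ := ih hg₁
    exact ⟨g, hg, (eqOn_iterate hS n h_eq₁).trans h_eq⟩

lemma exists_eqOn_wDij (h : CkHolderBound (k + i + j) α R B f) :
    ∃ g, CkHolderBound k α R B g ∧ Set.EqOn (wDij i j f) g (ball 0 R) := by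
  have h_wD : ∀ f g, Set.EqOn f g (ball 0 R) → Set.EqOn (wD f) (wD g) (ball 0 R) :=
    fun _ _ => eqOn_wD isOpen_ball
  obtain ⟨g₁, hg₁, h_eq₁⟩ := h.exists_eqOn_iterate (fun _ _ => eqOn_wDbar isOpen_ball)
    fun _ _ ⟨_, _, q, h_deriv, _, hq⟩ =>
      ⟨q, hq, fun z hz => wDbar_eq_of_hasFDerivAt (h_deriv.hasFDerivAt z hz)⟩
  obtain ⟨g, hg, h_eq⟩ := hg₁.exists_eqOn_iterate h_wD
    fun _ _ ⟨_, p, _, h_deriv, hp, _⟩ =>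
      ⟨p, hp, fun z hz => wD_eq_of_hasFDerivAt (h_deriv.hasFDerivAt z hz)⟩
  exact ⟨g, hg, (eqOn_iterate h_wD i h_eq₁).trans h_eq⟩

lemma holderBound_wDij (h : CkHolderBound (i + j) α R B f) :
    HolderBound α (ball 0 R) B (wDij i j f) := by
  obtain ⟨g, hg, h_eq⟩ := exists_eqOn_wDij (k := 0) (by rwa [zero_add])
  exact (HolderBound.mono_set hg ball_subset_closedBall).congr h_eq.symm

end CkHolderBound

end WirtingerDerivatives

section Norms

variable {k : ℕ} {α B R : ℝ} {f h : ℂ → ℂ} {s : Set ℂ}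

lemma HolderBound.Hol_le (hα₀ : 0 ≤ α) (h : HolderBound α s B f) :
    Hol α s f ≤ ENNReal.ofReal B := by
  refine iSup₂_le fun z hz => iSup₂_le fun w hw => iSup_le fun _ => ENNReal.div_le_of_le_mul ?_
  rw [← enorm_eq_nnnorm, ← enorm_eq_nnnorm, ← ofReal_norm, ← ofReal_norm,
    ENNReal.ofReal_rpow_of_nonneg (norm_nonneg _) hα₀, ← ENNReal.ofReal_mul' (by positivity)]
  exact ENNReal.ofReal_le_ofReal (h.norm_sub_le z hz w hw)

lemma norm_sub_le_Hol (hf : Hol α s f < ⊤) :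
    ∀ z ∈ s, ∀ w ∈ s, ‖f z - f w‖ ≤ (Hol α s f).toReal * ‖z - w‖ ^ α := by
  intro z hz w hw
  rcases eq_or_ne z w with rfl | hne
  · rw [sub_self, norm_zero]; positivity
  have h_quot : (‖f z - f w‖₊ : ℝ≥0∞) / (‖z - w‖₊ : ℝ≥0∞) ^ α ≤ Hol α s f :=
    le_iSup₂_of_le z hz (le_iSup₂_of_le w hw
      (le_iSup (fun _ : z ≠ w => (‖f z - f w‖₊ : ℝ≥0∞) / (‖z - w‖₊ : ℝ≥0∞) ^ α) hne))
  have h_pos : 0 < ‖z - w‖ ^ α := Real.rpow_pos_of_pos (norm_pos_iff.2 (sub_ne_zero.2 hne)) α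
  have h_real := ENNReal.toReal_mono hf.ne h_quot
  rwa [ENNReal.toReal_div, ← ENNReal.toReal_rpow, coe_toReal, coe_toReal, coe_nnnorm, coe_nnnorm,
    div_le_iff₀ h_pos] at h_real

lemma hnorm_lt_top (hα₀ : 0 < α) (hR : 0 ≤ R) (hh : Hol α (closedBall 0 R) h < ⊤) :
    hnorm α R h < ⊤ := by
  refine ENNReal.add_lt_top.2 ⟨?_, ENNReal.mul_lt_top ENNReal.ofReal_lt_top hh⟩
  set K := (Hol α (closedBall 0 R) h).toReal
  suffices h_sup : ∀ z ∈ closedBall (0 : ℂ) R, ‖h z‖ ≤ ‖h 0‖ + K * R ^ α by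
    refine (iSup₂_le fun z hz => ?_).trans_lt (ENNReal.ofReal_lt_top (r := ‖h 0‖ + K * R ^ α))
    rw [← enorm_eq_nnnorm, ← ofReal_norm]
    exact ENNReal.ofReal_le_ofReal (h_sup z hz)
  intro z hz
  calc ‖h z‖ ≤ ‖h 0‖ + ‖h z - h 0‖ := norm_le_norm_add_norm_sub' _ _
    _ ≤ ‖h 0‖ + K * ‖z - 0‖ ^ α := by
      gcongr; exact norm_sub_le_Hol hh z hz 0 (mem_closedBall_self hR)
    _ ≤ ‖h 0‖ + K * R ^ α := by
      gcongr; rwa [sub_zero, ← mem_closedBall_zero_iff]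

lemma exists_holderBound_hnorm (hα₀ : 0 < α) (hR : 0 < R) :
    ∃ C, ∀ h, Hol α (closedBall 0 R) h < ⊤ →
      HolderBound α (closedBall 0 R) (C * (hnorm α R h).toReal) h := by
  refine ⟨max 1 ((2 * R) ^ α)⁻¹, fun h hh => ?_⟩
  have h_fin : hnorm α R h ≠ ⊤ := (hnorm_lt_top hα₀ hR.le hh).ne
  rw [max_mul_of_nonneg _ _ ENNReal.toReal_nonneg, one_mul]
  refine HolderBound.mk (fun z hz => le_max_of_le_left ?_) (fun z hz w hw => ?_)
  · have h_sup : (‖h z‖₊ : ℝ≥0∞) ≤ hnorm α R h :=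
      (le_iSup₂ (f := fun z (_ : z ∈ closedBall (0 : ℂ) R) => (‖h z‖₊ : ℝ≥0∞)) z hz).trans
        le_self_add
    simpa using ENNReal.toReal_mono h_fin h_sup
  · refine (norm_sub_le_Hol hh z hz w hw).trans ?_
    gcongr
    have h_Hol : ENNReal.ofReal ((2 * R) ^ α) * Hol α (closedBall 0 R) h ≤ hnorm α R h :=
      le_add_self
    have h_real := ENNReal.toReal_mono h_fin h_Hol
    rw [ENNReal.toReal_mul, ENNReal.toReal_ofReal (by positivity)] at h_real
    exact le_max_of_le_right ((le_inv_mul_iff₀ (by positivity)).2 h_real)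

lemma HolderBound.hnormB_le (hα₀ : 0 ≤ α) (hR : 0 < R) (h : HolderBound α (ball 0 R) B f) :
    hnormB α R f ≤ ENNReal.ofReal ((1 + (2 * R) ^ α) * B) := by
  have hB : 0 ≤ B := h.nonneg (mem_ball_self hR)
  have h_sup : (⨆ z ∈ ball (0 : ℂ) R, (‖f z‖₊ : ℝ≥0∞)) ≤ ENNReal.ofReal B :=
    iSup₂_le fun z hz => by
      rw [← enorm_eq_nnnorm, ← ofReal_norm]
      exact ENNReal.ofReal_le_ofReal (h.norm_le z hz)
  rw [one_add_mul, ENNReal.ofReal_add hB (by positivity), ENNReal.ofReal_mul (by positivity)]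
  exact add_le_add h_sup (mul_le_mul_right (h.Hol_le hα₀) _)

namespace CkHolderBound

lemma ckHolderBall (hα₀ : 0 < α) (h : CkHolderBound k α R B f) : CkHolderBall k α R f := by
  refine ⟨h.contDiffOn hα₀, fun i j hij => ?_, fun i j hij => ?_⟩
  · obtain ⟨l, rfl⟩ := Nat.exists_eq_add_of_le' hij
    obtain ⟨g, hg, h_eq⟩ := exists_eqOn_wDij (add_assoc l i j ▸ h)
    exact ⟨g, hg.continuousOn hα₀, h_eq⟩
  · subst hij
    exact (h.holderBound_wDij.Hol_le hα₀.le).trans_lt ENNReal.ofReal_lt_top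

lemma hnormKB_le (hα₀ : 0 ≤ α) (hR : 0 < R) (h : CkHolderBound k α R B f) :
    hnormKB k α R f ≤ ENNReal.ofReal ((1 + (2 * R) ^ α) * B) := by
  refine iSup₂_le fun ⟨i, j⟩ hij => ?_
  obtain rfl := Finset.HasAntidiagonal.mem_antidiagonal.1 hij
  exact h.holderBound_wDij.hnormB_le hα₀ hR

end CkHolderBound

theorem exists_ckHolderBall_and_hnormKB_le (hα₀ : 0 < α) (hα₁ : α < 1) (hR : 0 < R) (μ ν : ℕ) :
    ∃ C, ∀ h, Hol α (closedBall 0 R) h < ⊤ →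
      CkHolderBall (μ + ν) α R ((Tcg R)^[ν] ((Tcgbar R)^[μ] h)) ∧
      hnormKB (μ + ν) α R ((Tcg R)^[ν] ((Tcgbar R)^[μ] h)) ≤ ENNReal.ofReal C * hnorm α R h := by
  obtain ⟨A, h_bound⟩ := exists_holderBound_hnorm hα₀ hR
  obtain ⟨C, hC⟩ := mapsCkHolder_iterate_Tcg_Tcgbar hα₀ hα₁ hR 0 μ ν
  rw [zero_add] at hC
  refine ⟨(1 + (2 * R) ^ α) * (C * A), fun h hh => ?_⟩
  have h_iterate := hC _ h (h_bound h hh)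
  refine ⟨h_iterate.ckHolderBall hα₀, (h_iterate.hnormKB_le hα₀.le hR).trans_eq ?_⟩
  rw [← ENNReal.ofReal_toReal (hnorm_lt_top hα₀ hR.le hh).ne,
    ← ENNReal.ofReal_mul' ENNReal.toReal_nonneg, ENNReal.toReal_ofReal ENNReal.toReal_nonneg]
  ring_nf

end Norms

section Dilation

/-- The dilation `z ↦ f (a z)`, which moves functions on a disk to a disk of another radius. -/
def dilate (a : ℝ) (f : ℂ → ℂ) : ℂ → ℂ := fun z => f (a • z)

variable {α R : ℝ}

lemma Hol_dilate (hα₀ : 0 ≤ α) (hR : 0 < R) (s : Set ℂ) (f : ℂ → ℂ) :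
    Hol α s (dilate R f) = ENNReal.ofReal (R ^ α) * Hol α ((R • ·) '' s) f := by
  have h_quot : ∀ z w : ℂ, (‖dilate R f z - dilate R f w‖₊ : ℝ≥0∞) / (‖z - w‖₊ : ℝ≥0∞) ^ α =
      ENNReal.ofReal (R ^ α) *
        ((‖f (R • z) - f (R • w)‖₊ : ℝ≥0∞) / (‖R • z - R • w‖₊ : ℝ≥0∞) ^ α) := by
    intro z w
    have hRα : ENNReal.ofReal (R ^ α) ≠ 0 := (ENNReal.ofReal_pos.2 (by positivity)).ne'
    rw [← smul_sub, nnnorm_smul, ENNReal.coe_mul, ENNReal.mul_rpow_of_nonneg _ _ hα₀,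
      ← enorm_eq_nnnorm R, Real.enorm_of_nonneg hR.le, ENNReal.ofReal_rpow_of_nonneg hR.le hα₀,
      ← mul_div_assoc, ENNReal.mul_div_mul_left _ _ hRα ENNReal.ofReal_ne_top]
    rfl
  simp only [Hol, iSup_image, h_quot, ENNReal.mul_iSup, ne_eq, smul_right_inj hR.ne']

lemma hnorm_dilate (hα₀ : 0 ≤ α) (hR : 0 < R) (f : ℂ → ℂ) :
    hnorm α 1 (dilate R f) = hnorm α R f := by
  have h_image : (R • ·) '' closedBall (0 : ℂ) 1 = closedBall 0 R :=
    smul_unitClosedBall_of_nonneg hR.le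
  rw [hnorm, hnorm, Hol_dilate hα₀ hR, ← h_image, iSup_image, ← mul_assoc,
    ← ENNReal.ofReal_mul (by positivity), mul_one, Real.mul_rpow two_pos.le hR.le]
  rfl

lemma hnormB_dilate (hα₀ : 0 ≤ α) (hR : 0 < R) (f : ℂ → ℂ) :
    hnormB α 1 (dilate R f) = hnormB α R f := by
  have h_image : (R • ·) '' ball (0 : ℂ) 1 = ball 0 R := smul_unitBall_of_pos hR
  rw [hnormB, hnormB, Hol_dilate hα₀ hR, ← h_image, iSup_image, ← mul_assoc,
    ← ENNReal.ofReal_mul (by positivity), mul_one, Real.mul_rpow two_pos.le hR.le]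
  rfl

variable {D S S' : (ℂ → ℂ) → ℂ → ℂ}

lemma map_iterate_eq_pow_smul {c : ℝ} (hD : ∀ f, D (S f) = c • S' (D f))
    (hS' : ∀ f, S' (c • f) = c • S' f) (n : ℕ) (f : ℂ → ℂ) :
    D (S^[n] f) = c ^ n • S'^[n] (D f) := by
  have h_comm : Function.Commute (c • ·) S' := fun f => (hS' f).symm
  have h_semi : Function.Semiconj D S ((c • ·) ∘ S') := hD
  rw [(h_semi.iterate_right n) f, h_comm.comp_iterate, smul_iterate, Function.comp_apply]

lemma iterate_smul_comm {c : ℝ} (hS : ∀ f, S (c • f) = c • S f) (n : ℕ) (f : ℂ → ℂ) :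
    S^[n] (c • f) = c • S^[n] f :=
  Function.Commute.iterate_left (g := (c • ·)) hS n f

lemma wD_smul (c : ℝ) (f : ℂ → ℂ) : wD (c • f) = c • wD f := by
  funext z
  simp only [wD, fderiv_const_smul_field, Pi.smul_apply, smul_apply, real_smul]
  ring

lemma wDbar_smul (c : ℝ) (f : ℂ → ℂ) : wDbar (c • f) = c • wDbar f := by
  funext z
  simp only [wDbar, fderiv_const_smul_field, Pi.smul_apply, smul_apply, real_smul]
  ring

lemma wDij_smul (i j : ℕ) (c : ℝ) (f : ℂ → ℂ) : wDij i j (c • f) = c • wDij i j f := by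
  rw [wDij, wDij, iterate_smul_comm (wDbar_smul c), iterate_smul_comm (wD_smul c)]

lemma fderiv_dilate (a : ℝ) (f : ℂ → ℂ) (z : ℂ) :
    fderiv ℝ (dilate a f) z = a • fderiv ℝ f (a • z) :=
  fderiv_comp_smul a

lemma dilate_wD (hR : R ≠ 0) (f : ℂ → ℂ) : dilate R (wD f) = R⁻¹ • wD (dilate R f) := by
  rw [eq_inv_smul_iff₀ hR]
  funext z
  simp only [wD, dilate, fderiv_dilate, Pi.smul_apply, smul_apply, real_smul]
  ring

lemma dilate_wDbar (hR : R ≠ 0) (f : ℂ → ℂ) : dilate R (wDbar f) = R⁻¹ • wDbar (dilate R f) := by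
  rw [eq_inv_smul_iff₀ hR]
  funext z
  simp only [wDbar, dilate, fderiv_dilate, Pi.smul_apply, smul_apply, real_smul]
  ring

lemma dilate_wDij (hR : R ≠ 0) (i j : ℕ) (f : ℂ → ℂ) :
    dilate R (wDij i j f) = R⁻¹ ^ (i + j) • wDij i j (dilate R f) := by
  rw [wDij, wDij, map_iterate_eq_pow_smul (dilate_wD hR) (wD_smul _),
    map_iterate_eq_pow_smul (dilate_wDbar hR) (wDbar_smul _), iterate_smul_comm (wD_smul _),
    smul_smul, pow_add]

lemma Tcg_smul (R c : ℝ) (f : ℂ → ℂ) : Tcg R (c • f) = c • Tcg R f := by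
  funext z
  simp only [Tcg, Pi.smul_apply, real_smul, mul_div_assoc, integral_const_mul]
  ring

lemma Tcgbar_smul (R c : ℝ) (f : ℂ → ℂ) : Tcgbar R (c • f) = c • Tcgbar R f := by
  have h_conj : (fun z => conj ((c • f) z)) = c • fun z => conj (f z) := by
    funext z
    rw [Pi.smul_apply, real_smul, map_mul, conj_ofReal, Pi.smul_apply, real_smul]
  funext z
  rw [Tcgbar, h_conj, Tcg_smul, Pi.smul_apply, real_smul, map_mul, conj_ofReal, Pi.smul_apply,
    real_smul, Tcgbar]

lemma dilate_Tcg (hR : 0 < R) (f : ℂ → ℂ) : dilate R (Tcg R f) = R • Tcg 1 (dilate R f) := by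
  funext z
  have hR₀ : (R : ℂ) ≠ 0 := ofReal_ne_zero.2 hR.ne'
  have h_subst := Measure.setIntegral_comp_smul_of_pos (μ := volume)
    (fun ζ : ℂ => f ζ / (ζ - R • z)) (closedBall 0 1) hR
  have h_integrand : ∀ ζ : ℂ, f (R • ζ) / (R • ζ - R • z) = (R : ℂ)⁻¹ * (f (R • ζ) / (ζ - z)) := by
    intro ζ
    rw [← smul_sub, real_smul (z := ζ - z), div_mul_eq_div_div, div_right_comm, div_eq_inv_mul]
  simp only [h_integrand, integral_const_mul] at h_subst
  rw [smul_unitClosedBall_of_nonneg hR.le, Complex.finrank_real_complex, real_smul,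
    Complex.ofReal_inv, Complex.ofReal_pow, eq_inv_mul_iff_mul_eq₀ (pow_ne_zero 2 hR₀), sq,
    mul_assoc, mul_inv_cancel_left₀ hR₀] at h_subst
  simp only [dilate, Tcg, Pi.smul_apply, real_smul] at h_subst ⊢
  rw [← h_subst]
  ring

lemma dilate_Tcgbar (hR : 0 < R) (f : ℂ → ℂ) :
    dilate R (Tcgbar R f) = R • Tcgbar 1 (dilate R f) := by
  funext z
  have h_Tcg := congrFun (dilate_Tcg hR fun w => conj (f w)) z
  calc conj (dilate R (Tcg R fun w => conj (f w)) z)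
      = conj (R • Tcg 1 (dilate R fun w => conj (f w)) z) := by rw [h_Tcg, Pi.smul_apply]
    _ = R • Tcgbar 1 (dilate R f) z := by
      rw [real_smul, map_mul, conj_ofReal, real_smul]; rfl

lemma dilate_iterate_Tcg_Tcgbar (hR : 0 < R) (μ ν : ℕ) (f : ℂ → ℂ) :
    dilate R ((Tcg R)^[ν] ((Tcgbar R)^[μ] f)) =
      R ^ (μ + ν) • (Tcg 1)^[ν] ((Tcgbar 1)^[μ] (dilate R f)) := by
  rw [map_iterate_eq_pow_smul (dilate_Tcg hR) (Tcg_smul 1 R),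
    map_iterate_eq_pow_smul (dilate_Tcgbar hR) (Tcgbar_smul 1 R),
    iterate_smul_comm (Tcg_smul 1 _), smul_smul, add_comm, pow_add]

lemma hnormKB_iterate_Tcg_Tcgbar (hα₀ : 0 ≤ α) (hR : 0 < R) (μ ν : ℕ) (f : ℂ → ℂ) :
    hnormKB (μ + ν) α R ((Tcg R)^[ν] ((Tcgbar R)^[μ] f)) =
      hnormKB (μ + ν) α 1 ((Tcg 1)^[ν] ((Tcgbar 1)^[μ] (dilate R f))) := by
  refine iSup_congr fun ⟨i, j⟩ => iSup_congr fun hij => ?_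
  rw [← hnormB_dilate hα₀ hR, dilate_wDij hR.ne', dilate_iterate_Tcg_Tcgbar hR, wDij_smul,
    smul_smul, Finset.HasAntidiagonal.mem_antidiagonal.1 hij, ← mul_pow, inv_mul_cancel₀ hR.ne',
    one_pow, one_smul]

end Dilation

end

theorem iterated_Tcg_norm_bound_general (μ ν : ℕ) {α : ℝ} (hα₀ : 0 < α) (hα₁ : α < 1) :
    ∃ C : ℝ, 0 < C ∧ ∀ R : ℝ, 0 < R → ∀ h : ℂ → ℂ,
      Hol α (closedBall (0 : ℂ) R) h < ⊤ →
        CkHolderBall (μ + ν) α R ((Tcg R)^[ν] ((Tcgbar R)^[μ] h)) ∧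
        hnormKB (μ + ν) α R ((Tcg R)^[ν] ((Tcgbar R)^[μ] h)) ≤
          ENNReal.ofReal C * hnorm α R h := by
  obtain ⟨C, hC⟩ := exists_ckHolderBall_and_hnormKB_le hα₀ hα₁ one_pos μ ν
  refine ⟨max C 1, by positivity, fun R hR h hh => ⟨?_, ?_⟩⟩
  · obtain ⟨_, h_class⟩ := exists_ckHolderBall_and_hnormKB_le hα₀ hα₁ hR μ ν
    exact (h_class h hh).1
  · have h_image : (R • ·) '' closedBall (0 : ℂ) 1 = closedBall 0 R :=
      smul_unitClosedBall_of_nonneg hR.le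
    have h_Hol : Hol α (closedBall 0 1) (dilate R h) < ⊤ := by
      rw [Hol_dilate hα₀.le hR, h_image]
      exact ENNReal.mul_lt_top ENNReal.ofReal_lt_top hh
    rw [hnormKB_iterate_Tcg_Tcgbar hα₀.le hR, ← hnorm_dilate hα₀.le hR]
    refine (hC _ h_Hol).2.trans ?_
    gcongr
    exact le_max_left C 1

/-- `T^ν T̄^μ h ∈ C^{m+α}(D)` with `‖T^ν T̄^μ h‖^{(m)} ≤ C ‖h‖`,
for `0 < R ≤ 1`, `μ + ν = m ≥ 1`, and `h ∈ C^{α}(D)`. -/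
theorem iterated_Tcg_norm_bound (m μ ν : ℕ) (hm : 1 ≤ m) (hμν : μ + ν = m)
    (α : ℝ) (hα : α ∈ Set.Ioo (0:ℝ) 1) :
    ∃ C : ℝ, 0 < C ∧ ∀ R : ℝ, 0 < R → R ≤ 1 → ∀ h : ℂ → ℂ,
      Hol α (closedBall (0:ℂ) R) h < ⊤ →
        CkHolderBall m α R ((Tcg R)^[ν] ((Tcgbar R)^[μ] h)) ∧
        hnormKB m α R ((Tcg R)^[ν] ((Tcgbar R)^[μ] h)) ≤
          ENNReal.ofReal C * hnorm α R h := by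
  obtain ⟨C, hC₀, hC⟩ := iterated_Tcg_norm_bound_general μ ν hα.1 hα.2
  exact ⟨C, hC₀, fun R hR _ h hh => hμν ▸ hC R hR h hh⟩
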